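/- arXiv:1704.08511 — 4 statements merged into one kernel-verified Lean document; each statement's English description precedes it below -/
import Mathlib

section
/- For every partition λ and every filling s = (s_{ij}) ∈ W_λ, the series Σ_{M∈SSYT(λ)} ∏_{(i,j)∈D(λ)} |m_{ij}^{−s_{ij}}| converges; in particular the Schur multiple zeta series ζ_λ(s) converges absolutely. -/
/-!
Write `σ p = Re (s p)` and let `n` be the number of boxes. In a semi-standard tableau the largest
entry is attained at a corner `c` (`exists_corner_max`). Finitely many corners leave room for an
`ε > 0` with `1 + n ε ≤ σ c` at every corner. The surplus factor `m_c ^ (-n ε)` can then be shared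
equally among all `n` boxes: since `m_p ≤ m_c`, it is at most `∏ p, m_p ^ (-ε)`, whence
`∏ p, m_p ^ (-σ p) ≤ ∏ p, m_p ^ (-(1 + ε))` (`prod_rpow_le_of_max`). The right-hand side is summable
over all fillings of the diagram by natural numbers, with sum `ζ(1 + ε) ^ n`
(`summable_pi_prod`), and a tableau is determined by its entries on the diagram.
-/

open scoped BigOperators

noncomputable section

namespace SMZ

/-- Box `(i,j)` (0-indexed) lies in the Young diagram of the partition `lam`. -/
def InDiag (lam : ℕ → ℕ) (p : ℕ × ℕ) : Prop := p.2 < lam p.1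

/-- `(i,j)` is a corner of the Young diagram of `lam`. -/
def IsCorner (lam : ℕ → ℕ) (p : ℕ × ℕ) : Prop :=
  InDiag lam p ∧ ¬ InDiag lam (p.1 + 1, p.2) ∧ ¬ InDiag lam (p.1, p.2 + 1)

/-- `lam` is the part function of a partition with exactly `r` positive parts. -/
def IsPartitionWith (r : ℕ) (lam : ℕ → ℕ) : Prop :=
  Antitone lam ∧ ∀ i, 0 < lam i ↔ i < r

/-- Semi-standard Young tableau of shape `lam`, normalized to be `0` off the diagram. -/
structure IsSSYT (lam : ℕ → ℕ) (m : ℕ × ℕ → ℕ) : Prop where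
  zero_off : ∀ p, ¬ InDiag lam p → m p = 0
  pos : ∀ p, InDiag lam p → 0 < m p
  row_le : ∀ i j, InDiag lam (i, j + 1) → m (i, j) ≤ m (i, j + 1)
  col_lt : ∀ i j, InDiag lam (i + 1, j) → m (i, j) < m (i + 1, j)

/-- The summand `1 / M^s` of the Schur multiple zeta series. -/
def term (r : ℕ) (lam : ℕ → ℕ) (s : ℕ × ℕ → ℂ) (m : ℕ × ℕ → ℕ) : ℂ :=
  ∏ i ∈ Finset.range r, ∏ j ∈ Finset.range (lam i), (m (i, j) : ℂ) ^ (-(s (i, j)))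

/-- The Schur multiple zeta function `ζ_λ(s)`. -/
def schurZeta (r : ℕ) (lam : ℕ → ℕ) (s : ℕ × ℕ → ℂ) : ℂ :=
  ∑' M : {m : ℕ × ℕ → ℕ // IsSSYT lam m}, term r lam s M.1

/-- The region `W_λ` of (sufficient) absolute convergence. -/
def MemW (lam : ℕ → ℕ) (s : ℕ × ℕ → ℂ) : Prop :=
  (∀ p, InDiag lam p → 1 ≤ (s p).re) ∧ ∀ p, IsCorner lam p → 1 < (s p).re

/-- Euler–Zagier multiple zeta function. -/
def mzv {n : ℕ} (s : Fin n → ℂ) : ℂ :=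
  ∑' f : {f : Fin n → ℕ // StrictMono f ∧ ∀ i, 0 < f i},
    ∏ i, (f.1 i : ℂ) ^ (-(s i))

/-- Euler–Zagier multiple zeta-star function. -/
def mzvStar {n : ℕ} (s : Fin n → ℂ) : ℂ :=
  ∑' f : {f : Fin n → ℕ // Monotone f ∧ ∀ i, 0 < f i},
    ∏ i, (f.1 i : ℂ) ^ (-(s i))

/-- `ζ⋆(a start, a (start+1), …)` with `len` terms; `1` if `len = 0`, `0` if `len < 0`. -/
def mzvStarSeq (a : ℤ → ℂ) (start len : ℤ) : ℂ :=
  if len < 0 then 0 else mzvStar fun i : Fin len.toNat => a (start + (i : ℕ))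

/-- `ζ(a start, a (start-1), …)` with `len` terms; `1` if `len = 0`, `0` if `len < 0`. -/
def mzvSeqDesc (a : ℤ → ℂ) (start len : ℤ) : ℂ :=
  if len < 0 then 0 else mzv fun i : Fin len.toNat => a (start - (i : ℕ))

/-- The conjugate partition: `conjPart r lam c` is the number of rows `i < r` with a box
in column `c`, i.e. the (0-indexed) `c`-th part of `λ'`. -/
def conjPart (r : ℕ) (lam : ℕ → ℕ) (c : ℕ) : ℕ :=
  ((Finset.range r).filter fun i => c < lam i).card

end SMZ

namespace SMZ

/-- A product of copies of a convergent nonnegative series, one for each element of a finite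
index type, converges when expanded as a sum over functions. -/
lemma summable_pi_prod {ι : Type*} [Fintype ι] [DecidableEq ι] {g : ℕ → ℝ}
    (hg0 : ∀ k, 0 ≤ g k) (hg : Summable g) :
    Summable fun f : ι → ℕ => ∏ p, g (f p) := by
  refine summable_of_sum_le (c := ∏ _p : ι, ∑' k, g k)
    (fun f => Finset.prod_nonneg fun p _ => hg0 _) fun u => ?_
  -- Enlarge the finite set `u` of functions to a box `S ^ ι`.
  set S : Finset ℕ := u.biUnion fun f => Finset.univ.image f with hS
  have hsub : u ⊆ Fintype.piFinset fun _ : ι => S := by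
    intro f hf
    rw [Fintype.mem_piFinset]
    intro p
    exact Finset.mem_biUnion.2 ⟨f, hf, Finset.mem_image_of_mem _ (Finset.mem_univ _)⟩
  calc ∑ f ∈ u, ∏ p, g (f p)
      ≤ ∑ f ∈ Fintype.piFinset fun _ : ι => S, ∏ p, g (f p) :=
        Finset.sum_le_sum_of_subset_of_nonneg hsub
          fun f _ _ => Finset.prod_nonneg fun p _ => hg0 _
    _ = ∏ _p : ι, ∑ k ∈ S, g k := Finset.sum_prod_piFinset S fun _ => g
    _ ≤ ∏ _p : ι, ∑' k, g k :=
        Finset.prod_le_prod (fun _ _ => Finset.sum_nonneg fun k _ => hg0 k)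
          fun _ _ => hg.sum_le_tsum S fun k _ => hg0 k

/-- If the exponent at a position `c` of maximal entry exceeds `1` by at least `#D * ε`, this excess
can be redistributed so that every exponent becomes `1 + ε`. -/
lemma prod_rpow_le_of_max {ι : Type*} [DecidableEq ι] (D : Finset ι) (m : ι → ℕ) (σ : ι → ℝ)
    (hm : ∀ p ∈ D, 0 < m p) (hσ : ∀ p ∈ D, 1 ≤ σ p) {c : ι} (hc : c ∈ D)
    (hmax : ∀ p ∈ D, m p ≤ m c) {ε : ℝ} (hε : 0 < ε) (hσc : 1 + D.card * ε ≤ σ c) :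
    ∏ p ∈ D, (m p : ℝ) ^ (-σ p) ≤ ∏ p ∈ D, (m p : ℝ) ^ (-(1 + ε)) := by
  have hone : ∀ p ∈ D, (1 : ℝ) ≤ m p := fun p hp => by exact_mod_cast hm p hp
  have hpos : ∀ p ∈ D, (0 : ℝ) < m p := fun p hp => by exact_mod_cast hm p hp
  calc ∏ p ∈ D, (m p : ℝ) ^ (-σ p)
      ≤ ∏ p ∈ D, ((m p : ℝ) ^ (-1 : ℝ) * if p = c then (m c : ℝ) ^ (-(D.card * ε)) else 1) := by
        refine Finset.prod_le_prod (fun p hp => by positivity) fun p hp => ?_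
        split_ifs with h
        · subst h
          rw [← Real.rpow_add (hpos p hp)]
          exact Real.rpow_le_rpow_of_exponent_le (hone p hp) (by linarith)
        · rw [mul_one]
          exact Real.rpow_le_rpow_of_exponent_le (hone p hp) (by linarith [hσ p hp])
    _ = (∏ p ∈ D, (m p : ℝ) ^ (-1 : ℝ)) * ∏ _p ∈ D, (m c : ℝ) ^ (-ε) := by
        rw [Finset.prod_mul_distrib, Finset.prod_ite_eq' D c, if_pos hc, Finset.prod_const,
          ← Real.rpow_mul_natCast (hpos c hc).le]
        congr 2
        ring
    _ ≤ (∏ p ∈ D, (m p : ℝ) ^ (-1 : ℝ)) * ∏ p ∈ D, (m p : ℝ) ^ (-ε) := by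
        refine mul_le_mul_of_nonneg_left ?_ (Finset.prod_nonneg fun p _ => by positivity)
        refine Finset.prod_le_prod (fun p _ => by positivity) fun p hp => ?_
        exact Real.rpow_le_rpow_of_nonpos (hpos p hp) (by exact_mod_cast hmax p hp) (by linarith)
    _ = ∏ p ∈ D, (m p : ℝ) ^ (-(1 + ε)) := by
        rw [← Finset.prod_mul_distrib]
        refine Finset.prod_congr rfl fun p hp => ?_
        rw [← Real.rpow_add (hpos p hp)]
        congr 1
        ring

/-- The largest entry of a semi-standard tableau is attained at a corner: among the boxes
with the largest entry, take one furthest to the right. -/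
lemma exists_corner_max {lam : ℕ → ℕ} {m : ℕ × ℕ → ℕ} (hm : IsSSYT lam m)
    (D : Finset (ℕ × ℕ)) (hD : ∀ p, p ∈ D ↔ InDiag lam p) (hne : D.Nonempty) :
    ∃ c ∈ D, IsCorner lam c ∧ ∀ p ∈ D, m p ≤ m c := by
  obtain ⟨⟨i, j⟩, hc, hmax⟩ := D.exists_max_image (fun p => toLex (m p, p.2)) hne
  simp only [Prod.Lex.toLex_le_toLex] at hmax
  refine ⟨(i, j), hc, ⟨(hD _).1 hc, fun h => ?_, fun h => ?_⟩, fun p hp => ?_⟩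
  · have h1 := hm.col_lt i j h
    have h2 := hmax _ ((hD _).2 h)
    dsimp only at h2
    omega
  · have h1 := hm.row_le i j h
    have h2 := hmax _ ((hD _).2 h)
    dsimp only at h2
    omega
  · have := hmax p hp
    omega

/-- The Young diagram as a finite set. -/
def boxes (r : ℕ) (lam : ℕ → ℕ) : Finset (ℕ × ℕ) :=
  (Finset.range r).biUnion fun i => (Finset.range (lam i)).image fun j => (i, j)

lemma mem_boxes_iff {r : ℕ} {lam : ℕ → ℕ} {p : ℕ × ℕ} :
    p ∈ boxes r lam ↔ p.1 ∈ Finset.range r ∧ p.2 ∈ Finset.range (lam p.1) := by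
  obtain ⟨i, j⟩ := p
  simp only [boxes, Finset.mem_biUnion, Finset.mem_image, Finset.mem_range, Prod.mk.injEq]
  constructor
  · rintro ⟨i', hi, j', hj, rfl, rfl⟩
    exact ⟨hi, hj⟩
  · rintro ⟨hi, hj⟩
    exact ⟨i, hi, j, hj, rfl, rfl⟩

lemma mem_boxes {r : ℕ} {lam : ℕ → ℕ} (hlam : IsPartitionWith r lam) (p : ℕ × ℕ) :
    p ∈ boxes r lam ↔ InDiag lam p := by
  rw [mem_boxes_iff, Finset.mem_range, Finset.mem_range, InDiag, ← hlam.2]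
  omega

lemma norm_term {r : ℕ} {lam : ℕ → ℕ} (hlam : IsPartitionWith r lam) (s : ℕ × ℕ → ℂ)
    {m : ℕ × ℕ → ℕ} (hm : IsSSYT lam m) :
    ‖term r lam s m‖ = ∏ p ∈ boxes r lam, (m p : ℝ) ^ (-(s p).re) := by
  rw [term, ← Finset.prod_finset_product (boxes r lam) _ _ (fun _ => mem_boxes_iff)
    (f := fun p => (m p : ℂ) ^ (-(s p))), norm_prod]
  refine Finset.prod_congr rfl fun p hp => ?_
  rw [Complex.norm_natCast_cpow_of_pos (hm.pos p ((mem_boxes hlam p).1 hp)), Complex.neg_re]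

end SMZ

theorem schurZeta_abs_convergent
    (r : ℕ) (lam : ℕ → ℕ) (hlam : SMZ.IsPartitionWith r lam)
    (s : ℕ × ℕ → ℂ) (hs : SMZ.MemW lam s) :
    Summable fun M : {m : ℕ × ℕ → ℕ // SMZ.IsSSYT lam m} => ‖SMZ.term r lam s M.1‖ := by
  classical
  set D := SMZ.boxes r lam with hDdef
  have hD : ∀ p, p ∈ D ↔ SMZ.InDiag lam p := SMZ.mem_boxes hlam
  obtain ⟨ε, hεc, hε⟩ : ∃ ε : ℝ,
      (∀ c ∈ D, SMZ.IsCorner lam c → 1 + D.card * ε < (s c).re) ∧ 0 < ε := by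
    have hev : ∀ᶠ ε : ℝ in nhdsWithin 0 (Set.Ioi 0),
        ∀ c ∈ D, SMZ.IsCorner lam c → 1 + D.card * ε < (s c).re := by
      refine (Filter.eventually_all_finset D).2 fun c _ => ?_
      by_cases hc : SMZ.IsCorner lam c
      · have hcont : Continuous fun ε : ℝ => 1 + (D.card : ℝ) * ε := by fun_prop
        have h0 : 1 + (D.card : ℝ) * 0 < (s c).re := by simpa using hs.2 c hc
        filter_upwards [nhdsWithin_le_nhds (hcont.continuousAt.eventually_lt_const h0)] with ε h _
        exact h
      · exact Filter.Eventually.of_forall fun _ h => absurd h hc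
    exact (hev.and self_mem_nhdsWithin).exists
  have hsum : Summable fun f : D → ℕ => ∏ p, (f p : ℝ) ^ (-(1 + ε)) :=
    SMZ.summable_pi_prod (g := fun k : ℕ => (k : ℝ) ^ (-(1 + ε))) (fun k => by positivity)
      (Real.summable_nat_rpow.2 (by linarith))
  -- Restriction to the diagram is injective because tableaux vanish off the diagram.
  have hinj : Function.Injective
      fun (M : {m : ℕ × ℕ → ℕ // SMZ.IsSSYT lam m}) (p : D) => M.1 p := by
    intro M N h
    ext p
    by_cases hp : p ∈ D
    · exact congrFun h ⟨p, hp⟩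
    · rw [hD] at hp
      rw [M.2.zero_off p hp, N.2.zero_off p hp]
  refine Summable.of_nonneg_of_le (fun _ => norm_nonneg _) (fun M => ?_)
    (hsum.comp_injective hinj)
  rw [SMZ.norm_term hlam s M.2]
  simp only [Function.comp_apply]
  rw [Finset.prod_coe_sort D fun p => (M.1 p : ℝ) ^ (-(1 + ε))]
  rcases D.eq_empty_or_nonempty with h | hne
  · rw [← hDdef, h, Finset.prod_empty, Finset.prod_empty]
  · obtain ⟨c, hc, hcorner, hmax⟩ := SMZ.exists_corner_max M.2 D hD hne
    exact SMZ.prod_rpow_le_of_max D M.1 (fun p => (s p).re) (fun p hp => M.2.pos p ((hD p).1 hp))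
      (fun p hp => hs.1 p ((hD p).1 hp)) hc hmax hε (hεc c hc hcorner).le
end
end

section
/- Let λ=(λ_1,…,λ_r) be a partition with conjugate partition λ'=(λ'_1,…,λ'_s), and let s=(s_{ij})∈W^diag_λ with common diagonal values a_k. Assume Re(s_{λ'_i,i})>1 for all 1≤i≤s. Then ζ_λ(s) = det[ ζ(a_{j−1}, a_{j−2}, …, a_{j−(λ'_i−i+j)}) ]_{1≤i,j≤s}, where the (i,j) entry is understood to be 1 if λ'_i−i+j=0 and 0 if λ'_i−i+j<0 (Jacobi–Trudi formula of E-type). -/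
/-!
The formula is the limit `N → ∞` of a polynomial identity for tableaux with entries at most `N`.

Let the weight of an entry `n` in a box of content `c` be `x c n`, for an arbitrary family `x` in a
commutative ring, and describe a shape by its column lengths `d j`. Both sides of the truncated
identity satisfy the same recursion in `N`:

* Boxes holding the entry `N + 1` in a semi-standard tableau are the bottom boxes of a set `S` of
  columns. Deleting them gives a tableau with entries at most `N` of the shape `d - 1_S`, which must
  again be a partition shape (`sum_tabs_succ`).
* Splitting truncated multiple zeta sums according to whether the largest variable equals `N + 1`
  writes the `i`-th row of the determinant as a sum of two rows, the second one multiplied by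
  `x (i - d i + 1) (N + 1)`; this factor is the same in every column because the last exponent of
  the sum in position `(i, j)` is independent of `j`. Multilinearity gives a sum over sets `S` of
  rows (`elemDet_succ`). If `d - 1_S` is not a partition shape, two consecutive rows of the
  corresponding determinant agree or its last row vanishes (`elemDet_strip_eq_zero`).

This proves `sum_tabs_eq_elemDet`. A single column is the special case of a `1 × 1` determinant,
which identifies the entries of the matrix with truncated multiple zeta values (`tendsto_elemSum`).

For convergence, the multiple zeta series are dominated by a product of one-variable series
(`summable_mzv`): the excess `ε` of the last exponent over `1` can be shared equally among all the
variables, since the last variable is the largest. Applying the truncated identity to the absolute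
values of the weights then bounds the partial sums of the tableau series by a convergent sequence
of determinants, so that series converges absolutely (`summable_tabs`), and both sides of the
complex truncated identity may be passed to the limit.
-/

open scoped BigOperators

noncomputable section

namespace SMZ

/-! ### Truncated identity: definitions -/

section Combinatorics

/-- The sum of `x st n₁ * x (st - 1) n₂ * ⋯ * x (st - len + 1) n_len` over
`0 < n₁ < ⋯ < n_len ≤ N`, defined by recursion on `N` through the case distinction `n_len ≤ N` or
`n_len = N + 1`. It is `1` for `len = 0` and `0` for `len < 0`. The arguments are `N`, `st`, `len`. -/
def elemSum {R : Type*} [CommRing R] (x : ℤ → ℕ → R) : ℕ → ℤ → ℤ → R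
  | 0, _, len => if len = 0 then 1 else 0
  | N + 1, st, len => elemSum x N st len + x (st - len + 1) (N + 1) * elemSum x N st (len - 1)

/-- Semi-standard Young tableaux of the shape with column lengths `d`, extended by `0` outside the
shape. Column lengths are integers so that boxes can be removed without truncated subtraction. -/
structure IsTab (d : ℕ → ℤ) (m : ℕ × ℕ → ℕ) : Prop where
  off : ∀ i j : ℕ, d j ≤ i → m (i, j) = 0
  pos : ∀ i j : ℕ, (i : ℤ) < d j → 0 < m (i, j)
  row : ∀ i j : ℕ, (i : ℤ) < d (j + 1) → m (i, j) ≤ m (i, j + 1)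
  col : ∀ i j : ℕ, (i : ℤ) + 1 < d j → m (i, j) < m (i + 1, j)

/-- `d` is the sequence of column lengths of a partition with at most `k` columns; nonnegativity is
a consequence (`IsAdm.nonneg`). -/
def IsAdm (k : ℕ) (d : ℕ → ℤ) : Prop := Antitone d ∧ ∀ j, k ≤ j → d j = 0

/-- Membership of a natural number in a set of column indices below `k`. -/
def InCols {k : ℕ} (S : Finset (Fin k)) (j : ℕ) : Prop := ∃ h : j < k, ⟨j, h⟩ ∈ S

open Classical in
/-- The column lengths after removing one box from the bottom of every column in `S`; the result
need not be a partition shape. -/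
def strip {k : ℕ} (d : ℕ → ℤ) (S : Finset (Fin k)) (j : ℕ) : ℤ :=
  d j - if InCols S j then 1 else 0

/-- The weight of a tableau, with weight `x c n` for the entry `n` in a box of content `c`. -/
def wt {R : Type*} [CommRing R] (k : ℕ) (x : ℤ → ℕ → R) (d : ℕ → ℤ) (m : ℕ × ℕ → ℕ) : R :=
  ∏ j : Fin k, ∏ i ∈ Finset.range (d j).toNat, x ((j : ℕ) - (i : ℕ)) (m (i, j))

lemma inCols_coe {k : ℕ} (S : Finset (Fin k)) (j : Fin k) : InCols S j ↔ j ∈ S := by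
  simp [InCols]

lemma IsAdm.nonneg {k : ℕ} {d : ℕ → ℤ} (h : IsAdm k d) (j : ℕ) : 0 ≤ d j := by
  have := h.1 (le_max_left j k)
  rw [h.2 _ (le_max_right j k)] at this
  exact this

lemma finite_tabs {k : ℕ} {d : ℕ → ℤ} (hd : IsAdm k d) (N : ℕ) :
    {m : ℕ × ℕ → ℕ | IsTab d m ∧ ∀ p, m p ≤ N}.Finite := by
  let B : Finset (ℕ × ℕ) := Finset.range (d 0).toNat ×ˢ Finset.range k
  refine Set.Finite.of_injOn (f := fun m (p : B) => m p)
    (t := Set.pi Set.univ fun _ : B => Set.Iic N) ?_ ?_ (Set.Finite.pi fun _ => Set.finite_Iic N)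
  · intro m hm p _
    exact hm.2 p
  · intro m hm m' hm' h
    funext ⟨i, j⟩
    by_cases hp : (i, j) ∈ B
    · exact congrFun h ⟨(i, j), hp⟩
    · have : d j ≤ i := by
        by_contra hc
        apply hp
        have h0 := hd.1 (Nat.zero_le j)
        have hk : j < k := by
          by_contra hk
          have := hd.2 j (by omega)
          omega
        simp only [B, Finset.mem_product, Finset.mem_range]
        omega
      rw [hm.1.off i j this, hm'.1.off i j this]

open Classical in
/-- The tableaux of shape `d` with entries at most `N`. The set is finite when `d` is admissible; the
value for other `d` is irrelevant. -/
def tabs (d : ℕ → ℤ) (N : ℕ) : Finset (ℕ × ℕ → ℕ) :=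
  if h : {m : ℕ × ℕ → ℕ | IsTab d m ∧ ∀ p, m p ≤ N}.Finite then h.toFinset else ∅

lemma mem_tabs {k : ℕ} {d : ℕ → ℤ} (hd : IsAdm k d) {N : ℕ} {m : ℕ × ℕ → ℕ} :
    m ∈ tabs d N ↔ IsTab d m ∧ ∀ p, m p ≤ N := by
  rw [tabs, dif_pos (finite_tabs hd N), Set.Finite.mem_toFinset, Set.mem_ofPred_eq]

/-! ### Removing the largest entry from a tableau -/

/-- If `S` is the set of columns containing the largest entry `N + 1`, then that entry occupies
exactly the bottom boxes of the columns in `S`. -/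
lemma tabs_fiber {k : ℕ} {d : ℕ → ℤ} (hd : IsAdm k d) {N : ℕ} {m : ℕ × ℕ → ℕ}
    (hm : IsTab d m) (hN : ∀ p, m p ≤ N + 1) {S : Finset (Fin k)}
    (hS : ∀ j : Fin k, j ∈ S ↔ ∃ i, m (i, (j : ℕ)) = N + 1) (i j : ℕ) :
    m (i, j) = N + 1 ↔ (i : ℤ) + 1 = d j ∧ InCols S j := by
  have key : ∀ i, m (i, j) = N + 1 → (i : ℤ) + 1 = d j := by
    intro i h
    have h1 : ¬ d j ≤ i := fun hc => by
      have := hm.off i j hc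
      omega
    have h2 : ¬ (i : ℤ) + 1 < d j := fun hc => by
      have := hm.col i j hc
      have := hN (i + 1, j)
      omega
    omega
  constructor
  · intro h
    have hk : j < k := by
      by_contra hk
      have := hd.2 j (by omega)
      have := key i h
      omega
    exact ⟨key i h, hk, (hS ⟨j, hk⟩).2 ⟨i, h⟩⟩
  · rintro ⟨h, hk, hj⟩
    obtain ⟨l, hl⟩ := (hS ⟨j, hk⟩).1 hj
    have := key l hl
    have : l = i := by omega
    exact this ▸ hl

/-- Weakly increasing rows make the shape left after deleting the entries `N + 1` a partition
shape: if columns `j` and `j + 1` have equal length, an entry `N + 1` at the bottom of the first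
forces one at the bottom of the second. -/
lemma strip_adm_of_tab {k : ℕ} {d : ℕ → ℤ} (hd : IsAdm k d) {N : ℕ} {m : ℕ × ℕ → ℕ}
    (hm : IsTab d m) (hN : ∀ p, m p ≤ N + 1) {S : Finset (Fin k)}
    (hS : ∀ i j : ℕ, m (i, j) = N + 1 ↔ (i : ℤ) + 1 = d j ∧ InCols S j)
    (hS' : ∀ j, InCols S j → 0 < d j) :
    IsAdm k (strip d S) := by
  constructor
  · refine antitone_nat_of_succ_le fun j => ?_
    have h := hd.1 (Nat.le_succ j)
    simp only [Nat.succ_eq_add_one] at h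
    by_cases h1 : InCols S j
    · by_cases h2 : InCols S (j + 1)
      · simp [strip, h1, h2, h]
      · simp only [strip, h1, h2, if_true, if_false]
        by_contra hc
        have hp := hS' j h1
        have he : d (j + 1) = d j := by omega
        obtain ⟨i, hi⟩ : ∃ i : ℕ, (i : ℤ) + 1 = d j := ⟨(d j - 1).toNat, by omega⟩
        have e1 := (hS i j).2 ⟨hi, h1⟩
        have e2 := hm.row i j (by omega)
        have e3 := hN (i, j + 1)
        exact h2 ((hS i (j + 1)).1 (by omega)).2
    · simp only [strip, h1, if_false]
      split_ifs <;> omega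
  · intro j hj
    have : ¬ InCols S j := fun ⟨h, _⟩ => by omega
    simp [strip, this, hd.2 j hj]

lemma remove_tab {k : ℕ} {d : ℕ → ℤ} {N : ℕ} {m : ℕ × ℕ → ℕ}
    (hm : IsTab d m) (hN : ∀ p, m p ≤ N + 1) {S : Finset (Fin k)}
    (hS : ∀ i j : ℕ, m (i, j) = N + 1 ↔ (i : ℤ) + 1 = d j ∧ InCols S j) :
    IsTab (strip d S) (fun p => if m p = N + 1 then 0 else m p) ∧
      ∀ p, (fun p => if m p = N + 1 then 0 else m p) p ≤ N := by
  have hin : ∀ i j : ℕ, (i : ℤ) < strip d S j → (i : ℤ) < d j ∧ m (i, j) ≠ N + 1 := by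
    intro i j h
    rw [Ne, hS]
    unfold strip at h
    split_ifs at h with h1
    · exact ⟨by omega, fun h2 => by omega⟩
    · exact ⟨by omega, fun h2 => h1 h2.2⟩
  refine ⟨⟨?_, ?_, ?_, ?_⟩, ?_⟩
  · intro i j h
    by_cases h1 : m (i, j) = N + 1
    · simp [h1]
    · simp only [h1, if_false]
      apply hm.off
      rw [hS] at h1
      unfold strip at h
      split_ifs at h with h2
      · by_contra hc
        exact h1 ⟨by omega, h2⟩
      · omega
  · intro i j h
    obtain ⟨h1, h2⟩ := hin i j h
    simpa [h2] using hm.pos i j h1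
  · intro i j h
    obtain ⟨h1, h2⟩ := hin i (j + 1) h
    have := hm.row i j h1
    simp only [h2, if_false]
    split_ifs <;> omega
  · intro i j h
    obtain ⟨h1, h2⟩ := hin (i + 1) j (by push_cast; exact h)
    have := hm.col i j (by push_cast at h1; exact h1)
    have := hN (i + 1, j)
    simp only [h2, if_false]
    split_ifs <;> omega
  · intro p
    have := hN p
    dsimp only
    split_ifs <;> omega

open Classical in
lemma add_tab {k : ℕ} {d : ℕ → ℤ} {N : ℕ} {m : ℕ × ℕ → ℕ}
    {S : Finset (Fin k)} (hs : IsAdm k (strip d S))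
    (hm : IsTab (strip d S) m) (hN : ∀ p, m p ≤ N) :
    IsTab d (fun p => if (p.1 : ℤ) + 1 = d p.2 ∧ InCols S p.2 then N + 1 else m p) ∧
      ∀ p, (fun p : ℕ × ℕ => if (p.1 : ℤ) + 1 = d p.2 ∧ InCols S p.2 then N + 1 else m p) p
        ≤ N + 1 := by
  have hin : ∀ i j : ℕ, (i : ℤ) < strip d S j ↔
      ((i : ℤ) < d j ∧ ¬ ((i : ℤ) + 1 = d j ∧ InCols S j)) := by
    intro i j
    unfold strip
    split_ifs with h1
    · simp only [h1, and_true]; omega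
    · simp [h1]
  refine ⟨⟨?_, ?_, ?_, ?_⟩, ?_⟩
  · intro i j h
    have h1 : ¬ ((i : ℤ) + 1 = d j ∧ InCols S j) := by omega
    simp only [h1, if_false]
    apply hm.off
    by_contra hc
    have := ((hin i j).1 (by omega)).1
    omega
  · intro i j h
    dsimp only
    split_ifs with h1
    · omega
    · exact hm.pos i j ((hin i j).2 ⟨h, h1⟩)
  · intro i j h
    dsimp only
    by_cases h2 : (i : ℤ) + 1 = d (j + 1) ∧ InCols S (j + 1)
    · rw [if_pos h2]
      have := hN (i, j)
      split_ifs <;> omega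
    · have h3 := (hin i (j + 1)).2 ⟨h, h2⟩
      have h4 : (i : ℤ) < strip d S j := lt_of_lt_of_le h3 (hs.1 (Nat.le_succ j))
      rw [if_neg h2, if_neg ((hin i j).1 h4).2]
      exact hm.row i j h3
  · intro i j h
    dsimp only
    by_cases h2 : ((i + 1 : ℕ) : ℤ) + 1 = d j ∧ InCols S j
    · rw [if_pos h2, if_neg (by push_cast at h2; omega)]
      have := hN (i, j)
      omega
    · have h3 := (hin (i + 1) j).2 ⟨by push_cast; exact h, h2⟩
      rw [if_neg h2, if_neg (by omega)]
      exact hm.col i j (by push_cast at h3; exact h3)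
  · intro p
    have := hN p
    dsimp only
    split_ifs <;> omega

lemma wt_strip {R : Type*} [CommRing R] {k : ℕ} (x : ℤ → ℕ → R) {d : ℕ → ℤ}
    {N : ℕ} {m m' : ℕ × ℕ → ℕ} {S : Finset (Fin k)}
    (hs : IsAdm k (strip d S))
    (h1 : ∀ i j : ℕ, (i : ℤ) + 1 = d j ∧ InCols S j → m (i, j) = N + 1)
    (h2 : ∀ i j : ℕ, (i : ℤ) < strip d S j → m (i, j) = m' (i, j)) :
    wt k x d m = (∏ j ∈ S, x ((j : ℕ) - d j + 1) (N + 1)) * wt k x (strip d S) m' := by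
  classical
  unfold wt
  have e : ∏ j ∈ S, x ((j : ℕ) - d j + 1) (N + 1) =
      ∏ j : Fin k, if j ∈ S then x ((j : ℕ) - d j + 1) (N + 1) else 1 := by
    simp [Finset.prod_ite_mem]
  rw [e, ← Finset.prod_mul_distrib]
  refine Finset.prod_congr rfl fun j _ => ?_
  have hn := hs.nonneg j
  have hrest : ∏ i ∈ Finset.range (strip d S j).toNat, x ((j : ℕ) - (i : ℕ)) (m (i, j)) =
      ∏ i ∈ Finset.range (strip d S j).toNat, x ((j : ℕ) - (i : ℕ)) (m' (i, j)) := by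
    refine Finset.prod_congr rfl fun i hi => ?_
    rw [Finset.mem_range] at hi
    rw [h2 i j (by omega)]
  rw [← hrest]
  by_cases hj : j ∈ S
  · have hj' := (inCols_coe S j).2 hj
    simp only [hj, if_true]
    simp only [strip, hj', if_true] at hn ⊢
    have hd : (d j).toNat = (d j - 1).toNat + 1 := by omega
    rw [hd, Finset.prod_range_succ, mul_comm, h1 _ _ ⟨by omega, hj'⟩]
    congr 2
    omega
  · have hj' := mt (inCols_coe S j).1 hj
    simp [strip, hj, hj']

open Classical in
/-- Recursion for the tableau sum, obtained by grouping the tableaux by the set `S` of columns that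
contain the entry `N + 1`. -/
lemma sum_tabs_succ {R : Type*} [CommRing R] {k : ℕ} (x : ℤ → ℕ → R) {d : ℕ → ℤ}
    (hd : IsAdm k d) (N : ℕ) :
    ∑ m ∈ tabs d (N + 1), wt k x d m = ∑ S : Finset (Fin k),
      if IsAdm k (strip d S) then (∏ j ∈ S, x ((j : ℕ) - d j + 1) (N + 1)) *
        ∑ m ∈ tabs (strip d S) N, wt k x (strip d S) m else 0 := by
  rw [← Finset.sum_fiberwise (tabs d (N + 1))
    (fun m => Finset.univ.filter fun j : Fin k => ∃ i, m (i, (j : ℕ)) = N + 1)]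
  refine Finset.sum_congr rfl fun S _ => ?_
  have fib : ∀ m, m ∈ (tabs d (N + 1)).filter (fun m =>
      (Finset.univ.filter fun j : Fin k => ∃ i, m (i, (j : ℕ)) = N + 1) = S) →
      IsTab d m ∧ (∀ p, m p ≤ N + 1) ∧
        (∀ i j : ℕ, m (i, j) = N + 1 ↔ (i : ℤ) + 1 = d j ∧ InCols S j) ∧
        ∀ j, InCols S j → 0 < d j := by
    intro m hm
    rw [Finset.mem_filter, mem_tabs hd] at hm
    obtain ⟨⟨hm, hN⟩, hS⟩ := hm
    have hS' : ∀ j : Fin k, j ∈ S ↔ ∃ i, m (i, (j : ℕ)) = N + 1 := by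
      intro j; simp [← hS]
    have h := tabs_fiber hd hm hN hS'
    refine ⟨hm, hN, h, ?_⟩
    rintro j ⟨hk, hj⟩
    obtain ⟨i, hi⟩ := (hS' ⟨j, hk⟩).1 hj
    have := ((h i j).1 hi).1
    omega
  split_ifs with hs
  · rw [Finset.mul_sum]
    refine Finset.sum_bij' (fun m _ p => if m p = N + 1 then 0 else m p)
      (fun m _ p => if (p.1 : ℤ) + 1 = d p.2 ∧ InCols S p.2 then N + 1 else m p)
      ?_ ?_ ?_ ?_ ?_
    · intro m hm
      obtain ⟨h1, h2, h3, -⟩ := fib m hm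
      exact (mem_tabs hs).2 (remove_tab h1 h2 h3)
    · intro m hm
      obtain ⟨h1, h2⟩ := (mem_tabs hs).1 hm
      have h3 := add_tab hs h1 h2
      rw [Finset.mem_filter]
      refine ⟨(mem_tabs hd).2 h3, ?_⟩
      ext j
      simp only [Finset.mem_filter, Finset.mem_univ, true_and]
      rw [← inCols_coe S j]
      constructor
      · rintro ⟨i, hi⟩
        by_contra hj
        have := h2 (i, (j : ℕ))
        simp only [hj, and_false, if_false] at hi
        omega
      · intro hj
        have := hs.nonneg j
        simp only [strip, hj, if_true] at this
        refine ⟨(d j - 1).toNat, if_pos ⟨?_, hj⟩⟩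
        omega
    · intro m hm
      obtain ⟨h1, h2, h3, -⟩ := fib m hm
      funext ⟨i, j⟩
      by_cases h : m (i, j) = N + 1
      · simp only [(h3 i j).1 h, and_self, if_true, h]
      · simp only [mt (h3 i j).2 h, if_false, h]
    · intro m hm
      obtain ⟨h1, h2⟩ := (mem_tabs hs).1 hm
      funext ⟨i, j⟩
      by_cases h : (i : ℤ) + 1 = d j ∧ InCols S j
      · simp only [h, and_self, if_true]
        refine (h1.off i j ?_).symm
        simp only [strip, h.2, if_true]
        omega
      · have := h2 (i, j)
        simp only [h, if_false]
        rw [if_neg (by omega)]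
    · intro m hm
      obtain ⟨h1, h2, h3, -⟩ := fib m hm
      refine wt_strip x hs (fun i j h => (h3 i j).2 h) fun i j h => ?_
      rw [if_neg]
      intro h4
      obtain ⟨h5, h6⟩ := (h3 i j).1 h4
      simp only [strip, h6, if_true] at h
      omega
  · refine Finset.sum_eq_zero fun m hm => ?_
    obtain ⟨h1, h2, h3, h4⟩ := fib m hm
    exact absurd (strip_adm_of_tab hd h1 h2 h3 h4) hs

open Classical in
lemma sum_tabs_zero {R : Type*} [CommRing R] {k : ℕ} (x : ℤ → ℕ → R) {d : ℕ → ℤ}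
    (hd : IsAdm k d) :
    ∑ m ∈ tabs d 0, wt k x d m = if d 0 = 0 then 1 else 0 := by
  split_ifs with h
  · have hz : ∀ j, d j = 0 := fun j => le_antisymm (h ▸ hd.1 (Nat.zero_le j)) (hd.nonneg j)
    have : tabs d 0 = {fun _ => 0} := by
      ext m
      rw [mem_tabs hd, Finset.mem_singleton]
      constructor
      · rintro ⟨-, h⟩
        funext p
        exact Nat.le_zero.1 (h p)
      · rintro rfl
        refine ⟨⟨fun _ _ _ => rfl, fun i j h => ?_, fun _ _ _ => le_rfl, fun i j h => ?_⟩,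
          fun _ => le_rfl⟩ <;> rw [hz] at h <;> omega
    rw [this, Finset.sum_singleton]
    simp [wt, hz]
  · refine Finset.sum_eq_zero fun m hm => ?_
    obtain ⟨h1, h2⟩ := (mem_tabs hd).1 hm
    have := h1.pos 0 0 (by have := hd.nonneg 0; push_cast; omega)
    have := h2 (0, 0)
    omega

/-! ### The same recursion for determinants -/

/-- The truncated Jacobi–Trudi determinant for the column lengths `d`. -/
def elemDet {R : Type*} [CommRing R] (k : ℕ) (x : ℤ → ℕ → R) (N : ℕ) (d : ℕ → ℤ) : R :=
  Matrix.det (Matrix.of fun i j : Fin k => elemSum x N ((j : ℕ) : ℤ) (d i - ((i : ℕ) : ℤ) + ((j : ℕ) : ℤ)))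

lemma elemSum_neg {R : Type*} [CommRing R] (x : ℤ → ℕ → R) (N : ℕ) (st len : ℤ) (h : len < 0) :
    elemSum x N st len = 0 := by
  induction N generalizing len with
  | zero => simp [elemSum, h.ne]
  | succ N ih => simp [elemSum, ih len h, ih (len - 1) (by omega)]

lemma elemSum_shift {R : Type*} [CommRing R] (x : ℤ → ℕ → R) (N : ℕ) (st len : ℤ) :
    elemSum (fun c => x (c + st)) N 0 len = elemSum x N st len := by
  induction N generalizing len with
  | zero => simp [elemSum]
  | succ N ih =>
    simp only [elemSum, ih]
    congr 3
    ring

lemma elemDet_zero {R : Type*} [CommRing R] {k : ℕ} (x : ℤ → ℕ → R) {d : ℕ → ℤ}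
    (hd : IsAdm k d) : elemDet k x 0 d = if d 0 = 0 then 1 else 0 := by
  split_ifs with h
  · have hz : ∀ j, d j = 0 := fun j => le_antisymm (h ▸ hd.1 (Nat.zero_le j)) (hd.nonneg j)
    unfold elemDet
    convert Matrix.det_one (n := Fin k) (R := R) using 2
    ext i j
    simp only [Matrix.of_apply, elemSum, hz, Matrix.one_apply, Fin.ext_iff]
    congr 1
    apply propext
    omega
  · have h0 := hd.nonneg 0
    have hk : 0 < k := by
      by_contra hk
      exact h (hd.2 0 (by omega))
    -- All truncated sums in row `0` have positive length `d 0 + j`, hence vanish for `N = 0`.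
    refine Matrix.det_eq_zero_of_row_eq_zero ⟨0, hk⟩ fun j => ?_
    simp only [Matrix.of_apply, elemSum]
    rw [if_neg]
    push_cast
    omega

open Classical in
/-- If `strip d S` fails to decrease from `j` to `j + 1`, it increases there by exactly one, so rows
`j` and `j + 1` agree; if `j` is the last row, its column length is `-1` and the row vanishes. -/
lemma elemDet_strip_eq_zero {R : Type*} [CommRing R] {k : ℕ} (x : ℤ → ℕ → R) {d : ℕ → ℤ}
    (hd : IsAdm k d) (N : ℕ) (S : Finset (Fin k)) (hs : ¬ IsAdm k (strip d S)) :
    elemDet k x N (strip d S) = 0 := by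
  have h : ¬ Antitone (strip d S) := fun h => hs ⟨h, fun j hj => by
    have : ¬ InCols S j := fun ⟨h, _⟩ => by omega
    simp [strip, this, hd.2 j hj]⟩
  have : ∃ j, strip d S j < strip d S (j + 1) := by
    by_contra! hc
    exact h (antitone_nat_of_succ_le hc)
  obtain ⟨j, hj⟩ := this
  have h1 := hd.1 (Nat.le_succ j)
  simp only [Nat.succ_eq_add_one] at h1
  have hjS : InCols S j := by
    by_contra hc
    simp only [strip, hc, if_false] at hj
    split_ifs at hj <;> omega
  have hjS' : ¬ InCols S (j + 1) := by
    intro hc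
    simp only [strip, hc, hjS, if_true] at hj
    omega
  have he : strip d S (j + 1) = strip d S j + 1 := by
    simp only [strip, hjS, hjS', if_true, if_false] at hj ⊢
    omega
  have hjk : j < k := hjS.1
  by_cases hk : j + 1 < k
  · refine Matrix.det_zero_of_row_eq (i := ⟨j, hjk⟩) (j := ⟨j + 1, hk⟩) (by simp) ?_
    funext l
    simp only [Matrix.of_apply, he]
    congr 1
    push_cast
    ring
  · refine Matrix.det_eq_zero_of_row_eq_zero ⟨j, hjk⟩ fun l => ?_
    refine elemSum_neg _ _ _ _ ?_
    have : strip d S (j + 1) = 0 := by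
      simp [strip, hjS', hd.2 (j + 1) (by omega)]
    have := l.2
    simp only
    omega

open Classical in
/-- Multilinear expansion of the determinant in its rows, each split by the recursion defining
`elemSum`. -/
lemma elemDet_succ {R : Type*} [CommRing R] {k : ℕ} (x : ℤ → ℕ → R) (d : ℕ → ℤ) (N : ℕ) :
    elemDet k x (N + 1) d = ∑ S : Finset (Fin k),
      (∏ j ∈ S, x ((j : ℕ) - d j + 1) (N + 1)) * elemDet k x N (strip d S) := by
  let A : Fin k → Fin k → R := fun i j =>
    elemSum x N ((j : ℕ) : ℤ) (d i - 1 - ((i : ℕ) : ℤ) + ((j : ℕ) : ℤ))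
  let B : Fin k → Fin k → R := fun i j =>
    elemSum x N ((j : ℕ) : ℤ) (d i - ((i : ℕ) : ℤ) + ((j : ℕ) : ℤ))
  let c : Fin k → R := fun j => x ((j : ℕ) - d j + 1) (N + 1)
  have h0 : elemDet k x (N + 1) d =
      (Matrix.detRowAlternating (n := Fin k) (R := R)).toMultilinearMap
        ((fun i => c i • A i) + B) := by
    unfold elemDet
    change Matrix.det _ = Matrix.det _
    congr 1
    ext i j
    simp only [Matrix.of_apply, elemSum, Pi.add_apply, Pi.smul_apply, smul_eq_mul, A, B, c]
    rw [add_comm]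
    congr 3 <;> ring
  rw [h0, MultilinearMap.map_add_univ]
  refine Finset.sum_congr rfl fun S _ => ?_
  have h1 : S.piecewise (fun i => c i • A i) B =
      S.piecewise (fun i => c i • (S.piecewise A B) i) (S.piecewise A B) := by
    funext i
    by_cases hi : i ∈ S <;> simp [hi]
  rw [h1, MultilinearMap.map_piecewise_smul, smul_eq_mul]
  congr 1
  change Matrix.det _ = Matrix.det _
  congr 1
  ext i j
  have := inCols_coe S i
  by_cases hi : i ∈ S
  · simp only [Matrix.of_apply, strip, Finset.piecewise, hi, this, if_true, A]
  · simp only [Matrix.of_apply, strip, Finset.piecewise, hi, this, if_false, B, sub_zero]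

/-- The Jacobi–Trudi formula of `E`-type for tableaux with bounded entries and arbitrary
content-dependent weights. -/
theorem sum_tabs_eq_elemDet {R : Type*} [CommRing R] {k : ℕ} (x : ℤ → ℕ → R) {d : ℕ → ℤ}
    (hd : IsAdm k d) (N : ℕ) : ∑ m ∈ tabs d N, wt k x d m = elemDet k x N d := by
  classical
  induction N generalizing d with
  | zero => rw [sum_tabs_zero x hd, elemDet_zero x hd]
  | succ N ih =>
    rw [sum_tabs_succ x hd, elemDet_succ]
    refine Finset.sum_congr rfl fun S _ => ?_
    split_ifs with hs
    · rw [ih hs]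
    · rw [elemDet_strip_eq_zero x hd N S hs, mul_zero]

end Combinatorics

end SMZ

namespace SMZ

/-! ### Passing to the limit -/

section Analysis

open Filter Topology

lemma tendsto_sum_subtype {α R : Type*} [AddCommMonoid R] [TopologicalSpace R]
    {P : α → Prop} {T : ℕ → Finset α} {w : α → R} (hP : ∀ N, ∀ m ∈ T N, P m) (hT : Monotone T)
    (hex : ∀ m, P m → ∃ N, m ∈ T N) (hs : Summable fun m : {m // P m} => w m.1) :
    Tendsto (fun N => ∑ m ∈ T N, w m) atTop (𝓝 (∑' m : {m // P m}, w m.1)) := by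
  classical
  have h1 : Tendsto (fun N => Finset.subtype P (T N)) atTop atTop := by
    refine tendsto_atTop_finset_of_monotone (fun a b h => Finset.subtype_mono (hT h)) ?_
    rintro ⟨m, hm⟩
    obtain ⟨N, hN⟩ := hex m hm
    exact ⟨N, by simpa using hN⟩
  refine (hs.hasSum.comp h1).congr fun N => ?_
  exact Finset.sum_subtype_of_mem w (hP N)

lemma tabs_mono {k : ℕ} {d : ℕ → ℤ} (hd : IsAdm k d) : Monotone (tabs d) := by
  intro a b h m hm
  rw [mem_tabs hd] at hm ⊢
  exact ⟨hm.1, fun p => (hm.2 p).trans h⟩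

lemma exists_mem_tabs {k : ℕ} {d : ℕ → ℤ} (hd : IsAdm k d) {m : ℕ × ℕ → ℕ} (hm : IsTab d m) :
    ∃ N, m ∈ tabs d N := by
  let B : Finset (ℕ × ℕ) := Finset.range (d 0).toNat ×ˢ Finset.range k
  refine ⟨B.sup m, (mem_tabs hd).2 ⟨hm, ?_⟩⟩
  rintro ⟨i, j⟩
  by_cases hp : (i, j) ∈ B
  · exact Finset.le_sup hp
  · rw [hm.off i j]
    · exact Nat.zero_le _
    · by_contra hc
      apply hp
      have h0 := hd.1 (Nat.zero_le j)
      have hk : j < k := by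
        by_contra hk
        have := hd.2 j (by omega)
        omega
      simp only [B, Finset.mem_product, Finset.mem_range]
      omega

lemma tendsto_elemDet {R : Type*} [CommRing R] [TopologicalSpace R] {k : ℕ} (x : ℤ → ℕ → R)
    {d : ℕ → ℤ} (hd : IsAdm k d) (hs : Summable fun m : {m // IsTab d m} => wt k x d m.1) :
    Tendsto (fun N => elemDet k x N d) atTop (𝓝 (∑' m : {m // IsTab d m}, wt k x d m.1)) := by
  simp_rw [← sum_tabs_eq_elemDet x hd]
  exact tendsto_sum_subtype (fun N m hm => ((mem_tabs hd).1 hm).1) (tabs_mono hd)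
    (fun m hm => exists_mem_tabs hd hm) hs

/-- For nonnegative weights, boundedness of the truncated determinants bounds all partial sums of
the tableau series. -/
lemma summable_tabs {k : ℕ} {y : ℤ → ℕ → ℝ} (hy : ∀ c n, 0 ≤ y c n) {d : ℕ → ℤ} (hd : IsAdm k d)
    {C : ℝ} (hC : ∀ N, elemDet k y N d ≤ C) : Summable fun m : {m // IsTab d m} => wt k y d m.1 := by
  classical
  have hw : ∀ m, 0 ≤ wt k y d m := fun m =>
    Finset.prod_nonneg fun _ _ => Finset.prod_nonneg fun _ _ => hy _ _
  refine summable_of_sum_le (c := C) (fun m => hw m.1) fun u => ?_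
  choose N hN using fun m : {m // IsTab d m} => exists_mem_tabs hd m.2
  refine le_trans ?_ (hC (u.sup N))
  rw [← sum_tabs_eq_elemDet y hd]
  refine le_trans (Finset.sum_map u (Function.Embedding.subtype _) (wt k y d)).ge ?_
  refine Finset.sum_le_sum_of_subset_of_nonneg ?_ fun m _ _ => hw m
  intro m hm
  rw [Finset.mem_map] at hm
  obtain ⟨t, ht, rfl⟩ := hm
  exact tabs_mono hd (Finset.le_sup ht) (hN t)

/-- Column lengths of the shape consisting of a single column with `n` boxes. -/
def colShape (n : ℕ) (j : ℕ) : ℤ := if j = 0 then n else 0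

lemma colShape_adm (n : ℕ) : IsAdm 1 (colShape n) := by
  refine ⟨antitone_nat_of_succ_le fun j => ?_, fun j hj => ?_⟩
  · simp only [colShape, Nat.succ_ne_zero, if_false]
    split_ifs <;> simp
  · simp only [colShape]
    rw [if_neg (by omega)]

/-- Strictly increasing sequences of `n` positive integers are the tableaux with one column of
`n` boxes. -/
def colEquiv (n : ℕ) :
    {f : Fin n → ℕ // StrictMono f ∧ ∀ i, 0 < f i} ≃ {m // IsTab (colShape n) m} where
  toFun f := ⟨fun p => if h : p.1 < n ∧ p.2 = 0 then f.1 ⟨p.1, h.1⟩ else 0, by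
    obtain ⟨f, hf, hpos⟩ := f
    refine ⟨?_, ?_, ?_, ?_⟩
    · intro i j h
      rw [dif_neg]
      rintro ⟨h1, h2⟩
      simp only [colShape, if_pos h2] at h
      omega
    · intro i j h
      unfold colShape at h
      split_ifs at h with h2
      · rw [dif_pos ⟨by omega, h2⟩]
        exact hpos _
      · omega
    · intro i j h
      simp only [colShape, Nat.succ_ne_zero, if_false] at h
      omega
    · intro i j h
      unfold colShape at h
      split_ifs at h with h2
      · rw [dif_pos ⟨by simp only; omega, h2⟩, dif_pos ⟨by simp only; omega, h2⟩]
        exact hf (by simp [Fin.lt_def])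
      · omega⟩
  invFun m := ⟨fun i => m.1 (i, 0), by
    obtain ⟨m, hm⟩ := m
    constructor
    · cases n with
      | zero => exact fun i => i.elim0
      | succ n =>
        rw [Fin.strictMono_iff_lt_succ]
        intro i
        have := i.2
        exact hm.col i 0 (by simp only [colShape, if_true]; push_cast; omega)
    · intro i
      have := i.2
      exact hm.pos i 0 (by simp only [colShape, if_true]; omega)⟩
  left_inv f := by
    ext i
    simp
  right_inv m := by
    obtain ⟨m, hm⟩ := m
    ext ⟨i, j⟩
    dsimp only
    split_ifs with h
    · obtain ⟨h1, rfl⟩ := h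
      rfl
    · refine (hm.off i j ?_).symm
      unfold colShape
      split_ifs <;> omega

lemma wt_colEquiv {R : Type*} [CommRing R] (x : ℤ → ℕ → R) (n : ℕ) (st : ℤ)
    (f : {f : Fin n → ℕ // StrictMono f ∧ ∀ i, 0 < f i}) :
    wt 1 (fun c => x (c + st)) (colShape n) (colEquiv n f).1 =
      ∏ i : Fin n, x (st - (i : ℕ)) (f.1 i) := by
  simp only [wt, Finset.univ_unique, Fin.default_eq_zero, Finset.prod_singleton, Fin.val_zero,
    colShape, if_true, Int.toNat_natCast]
  rw [Finset.prod_range]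
  refine Finset.prod_congr rfl fun i _ => ?_
  have : (colEquiv n f).1 ((i : ℕ), 0) = f.1 i := by simp [colEquiv]
  rw [this]
  congr 1
  push_cast
  ring

/-- Truncated sums converge to the multiple zeta series, by the case of a single column: there the
determinant has size one. -/
lemma tendsto_elemSum {R : Type*} [CommRing R] [TopologicalSpace R] (x : ℤ → ℕ → R)
    (st : ℤ) (n : ℕ)
    (hs : Summable fun f : {f : Fin n → ℕ // StrictMono f ∧ ∀ i, 0 < f i} =>
      ∏ i : Fin n, x (st - (i : ℕ)) (f.1 i)) :
    Tendsto (fun N => elemSum x N st n) atTop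
      (𝓝 (∑' f : {f : Fin n → ℕ // StrictMono f ∧ ∀ i, 0 < f i},
        ∏ i : Fin n, x (st - (i : ℕ)) (f.1 i))) := by
  let W : {m // IsTab (colShape n) m} → R :=
    fun m => wt 1 (fun c => x (c + st)) (colShape n) m.1
  have hw : (fun f : {f : Fin n → ℕ // StrictMono f ∧ ∀ i, 0 < f i} =>
      ∏ i : Fin n, x (st - (i : ℕ)) (f.1 i)) = W ∘ colEquiv n :=
    funext fun f => (wt_colEquiv x n st f).symm
  rw [hw] at hs ⊢
  have hs' : Summable W := (Equiv.summable_iff (colEquiv n)).1 hs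
  have ht : ∑' f, (W ∘ colEquiv n) f = ∑' m, W m := Equiv.tsum_eq (colEquiv n) W
  rw [ht]
  have hE : ∀ N, elemDet 1 (fun c => x (c + st)) N (colShape n) = elemSum x N st n := by
    intro N
    rw [elemDet, Matrix.det_fin_one, Matrix.of_apply, ← elemSum_shift x N st n]
    simp [colShape]
  exact (tendsto_elemDet (fun c => x (c + st)) (colShape_adm n) hs').congr hE

/-! ### Absolute convergence of multiple zeta series -/

lemma summable_prod_pi {n : ℕ} {g : ℕ → ℝ} (hg : ∀ m, 0 ≤ g m) (hs : Summable g) :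
    Summable fun f : Fin n → ℕ => ∏ i, g (f i) := by
  classical
  refine summable_of_sum_le (c := (∑' m, g m) ^ n)
    (fun f => Finset.prod_nonneg fun i _ => hg _) fun u => ?_
  obtain ⟨t, ht⟩ : ∃ t : Fin n → Finset ℕ, u ⊆ Fintype.piFinset t :=
    ⟨fun i => u.image fun f => f i, fun f hf =>
      Fintype.mem_piFinset.2 fun i => Finset.mem_image_of_mem (fun f : Fin n → ℕ => f i) hf⟩
  calc ∑ f ∈ u, ∏ i, g (f i)
      ≤ ∑ f ∈ Fintype.piFinset t, ∏ i, g (f i) :=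
        Finset.sum_le_sum_of_subset_of_nonneg ht
          fun f _ _ => Finset.prod_nonneg fun i _ => hg _
    _ = ∏ i : Fin n, ∑ m ∈ t i, g m := (Finset.prod_univ_sum t fun _ => g).symm
    _ ≤ ∏ _i : Fin n, ∑' m, g m :=
        Finset.prod_le_prod (fun i _ => Finset.sum_nonneg fun m _ => hg m)
          fun i _ => hs.sum_le_tsum _ fun m _ => hg m
    _ = (∑' m, g m) ^ n := by simp

/-- Absolute convergence of the multiple zeta series. With `ε` the excess of the real part of the
last exponent over `1`, the bound `f_last ^ (-ε) ≤ ∏ i, f_i ^ (-ε / n)` dominates the series by a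
product of `n` convergent series `∑ m ^ (-(1 + ε / n))`. -/
lemma summable_mzv {n : ℕ} (s : Fin n → ℂ) (h1 : ∀ i, 1 ≤ (s i).re)
    (h2 : ∀ i : Fin n, (i : ℕ) + 1 = n → 1 < (s i).re) :
    Summable fun f : {f : Fin n → ℕ // StrictMono f ∧ ∀ i, 0 < f i} =>
      ∏ i, ‖(f.1 i : ℂ) ^ (-(s i))‖ := by
  cases n with
  | zero => exact Summable.of_finite
  | succ n =>
    have hlast := h2 (Fin.last n) (by simp)
    set ε : ℝ := (s (Fin.last n)).re - 1 with hε
    have hε0 : 0 < ε := by linarith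
    have hn : (0 : ℝ) < (n + 1 : ℕ) := by positivity
    set δ : ℝ := ε / (n + 1 : ℕ) with hδ
    have hδ0 : 0 < δ := div_pos hε0 hn
    have hg : Summable fun m : ℕ => (m : ℝ) ^ (-(1 + δ)) :=
      Real.summable_nat_rpow.2 (by linarith)
    refine Summable.of_nonneg_of_le (fun f => Finset.prod_nonneg fun i _ => norm_nonneg _) ?_
      ((summable_prod_pi (n := n + 1) (fun m => Real.rpow_nonneg (Nat.cast_nonneg m) _) hg).comp_injective
        Subtype.val_injective)
    rintro ⟨f, hf, hpos⟩
    simp only [Function.comp]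
    have hp : ∀ i, (0 : ℝ) < f i := fun i => by exact_mod_cast hpos i
    have hp1 : ∀ i, (1 : ℝ) ≤ f i := fun i => by exact_mod_cast hpos i
    calc ∏ i, ‖(f i : ℂ) ^ (-(s i))‖
        ≤ ∏ i, ((f i : ℝ) ^ (-1 : ℝ) *
            if i = Fin.last n then (f (Fin.last n) : ℝ) ^ (-ε) else 1) := by
          refine Finset.prod_le_prod (fun i _ => norm_nonneg _) fun i _ => ?_
          rw [Complex.norm_natCast_cpow_of_pos (hpos i), Complex.neg_re]
          split_ifs with hi
          · subst hi
            rw [← Real.rpow_add (hp _)]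
            refine le_of_eq (congrArg _ ?_)
            rw [hε]; ring
          · rw [mul_one]
            exact Real.rpow_le_rpow_of_exponent_le (hp1 i) (by linarith [h1 i])
      _ = (∏ i, (f i : ℝ) ^ (-1 : ℝ)) * ∏ _i : Fin (n + 1), (f (Fin.last n) : ℝ) ^ (-δ) := by
          rw [Finset.prod_mul_distrib]
          congr 1
          rw [Finset.prod_ite_eq' Finset.univ (Fin.last n) fun _ => (f (Fin.last n) : ℝ) ^ (-ε)]
          rw [if_pos (Finset.mem_univ _), Finset.prod_const, Finset.card_univ, Fintype.card_fin,
            ← Real.rpow_natCast, ← Real.rpow_mul (hp _).le]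
          congr 1
          rw [hδ]
          field_simp
      _ ≤ (∏ i, (f i : ℝ) ^ (-1 : ℝ)) * ∏ i, (f i : ℝ) ^ (-δ) := by
          refine mul_le_mul_of_nonneg_left ?_
            (Finset.prod_nonneg fun i _ => Real.rpow_nonneg (hp i).le _)
          refine Finset.prod_le_prod (fun i _ => Real.rpow_nonneg (hp _).le _) fun i _ => ?_
          refine Real.rpow_le_rpow_of_nonpos (hp i) ?_ (by linarith)
          exact_mod_cast hf.monotone (Fin.le_last i)
      _ = ∏ i, (f i : ℝ) ^ (-(1 + δ)) := by
          rw [← Finset.prod_mul_distrib]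
          refine Finset.prod_congr rfl fun i _ => ?_
          rw [← Real.rpow_add (hp i)]
          congr 1
          ring

end Analysis

/-! ### From row lengths to column lengths -/

section Shape

lemma lt_conjPart {r : ℕ} {lam : ℕ → ℕ} (hlam : IsPartitionWith r lam) (i j : ℕ) :
    i < conjPart r lam j ↔ j < lam i := by
  constructor
  · intro h
    by_contra hc
    have hsub : (Finset.range r).filter (fun i => j < lam i) ⊆ Finset.range i := by
      intro l hl
      rw [Finset.mem_filter] at hl
      rw [Finset.mem_range]
      by_contra hl'
      have := hlam.1 (not_lt.1 hl')
      omega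
    have := Finset.card_le_card hsub
    rw [Finset.card_range] at this
    unfold conjPart at h
    omega
  · intro h
    have hsub : Finset.range (i + 1) ⊆ (Finset.range r).filter (fun i => j < lam i) := by
      intro l hl
      rw [Finset.mem_range] at hl
      have := hlam.1 (show l ≤ i by omega)
      rw [Finset.mem_filter, Finset.mem_range]
      exact ⟨(hlam.2 l).1 (by omega), by omega⟩
    have := Finset.card_le_card hsub
    rw [Finset.card_range] at this
    unfold conjPart
    omega

lemma conjPart_adm {r : ℕ} {lam : ℕ → ℕ} (hlam : IsPartitionWith r lam) :
    IsAdm (lam 0) (fun j => (conjPart r lam j : ℤ)) := by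
  constructor
  · intro a b h
    simp only
    have : conjPart r lam b ≤ conjPart r lam a := by
      by_contra hc
      have := (lt_conjPart hlam (conjPart r lam a) b).1 (by omega)
      have := (lt_conjPart hlam (conjPart r lam a) a).2 (by omega)
      omega
    exact_mod_cast this
  · intro j hj
    have : ¬ 0 < conjPart r lam j := by
      rw [lt_conjPart hlam]
      omega
    simp only
    omega

lemma isSSYT_iff {r : ℕ} {lam : ℕ → ℕ} (hlam : IsPartitionWith r lam) (m : ℕ × ℕ → ℕ) :
    IsSSYT lam m ↔ IsTab (fun j => (conjPart r lam j : ℤ)) m := by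
  have h : ∀ i j : ℕ, InDiag lam (i, j) ↔ (i : ℤ) < conjPart r lam j := by
    intro i j
    rw [Nat.cast_lt, lt_conjPart hlam]
    rfl
  constructor
  · rintro ⟨h1, h2, h3, h4⟩
    exact ⟨fun i j hh => h1 _ (by rw [h]; omega), fun i j hh => h2 _ ((h i j).2 hh),
      fun i j hh => h3 i j ((h _ _).2 hh), fun i j hh => h4 i j ((h _ _).2 (by push_cast; exact hh))⟩
  · rintro ⟨h1, h2, h3, h4⟩
    exact ⟨fun p hh => h1 _ _ (by rw [h p.1 p.2] at hh; simpa using hh),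
      fun p hh => h2 _ _ ((h p.1 p.2).1 hh),
      fun i j hh => h3 i j ((h _ _).1 hh),
      fun i j hh => h4 i j (by have := (h _ _).1 hh; push_cast at this; exact this)⟩

lemma term_eq_wt {r : ℕ} {lam : ℕ → ℕ} (hlam : IsPartitionWith r lam) (s : ℕ × ℕ → ℂ) (a : ℤ → ℂ)
    (hdiag : ∀ p : ℕ × ℕ, InDiag lam p → s p = a ((p.2 : ℤ) - (p.1 : ℤ))) (m : ℕ × ℕ → ℕ) :
    term r lam s m = wt (lam 0) (fun c n => (n : ℂ) ^ (-(a c)))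
      (fun j => (conjPart r lam j : ℤ)) m := by
  unfold term wt
  simp only [Int.toNat_natCast]
  rw [← Finset.prod_range fun j => ∏ i ∈ Finset.range (conjPart r lam j),
    (m (i, j) : ℂ) ^ (-(a ((j : ℤ) - (i : ℤ))))]
  rw [Finset.prod_comm' (t' := Finset.range (lam 0))
    (s' := fun j => Finset.range (conjPart r lam j))]
  · refine Finset.prod_congr rfl fun j _ => Finset.prod_congr rfl fun i hi => ?_
    rw [hdiag (i, j) ((lt_conjPart hlam i j).1 (Finset.mem_range.1 hi))]
  · intro i j
    simp only [Finset.mem_range]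
    rw [lt_conjPart hlam, ← hlam.2 i]
    have := hlam.1 (Nat.zero_le i)
    omega

end Shape

end SMZ

/-- Jacobi–Trudi formula of `E`-type for Schur multiple zeta functions. -/
theorem schurZeta_jacobiTrudi_E
    (r : ℕ) (lam : ℕ → ℕ) (hlam : SMZ.IsPartitionWith r lam)
    (s : ℕ × ℕ → ℂ) (a : ℤ → ℂ)
    (hW : SMZ.MemW lam s)
    (hdiag : ∀ p : ℕ × ℕ, SMZ.InDiag lam p → s p = a ((p.2 : ℤ) - (p.1 : ℤ)))
    (hre : ∀ i < lam 0, 1 < (s (SMZ.conjPart r lam i - 1, i)).re) :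
    SMZ.schurZeta r lam s =
      Matrix.det (Matrix.of fun i j : Fin (lam 0) =>
        SMZ.mzvSeqDesc a ((j : ℕ) : ℤ)
          ((SMZ.conjPart r lam (i : ℕ) : ℤ) - ((i : ℕ) : ℤ) + ((j : ℕ) : ℤ))) := by
  have hd := SMZ.conjPart_adm hlam
  set d : ℕ → ℤ := fun j => (SMZ.conjPart r lam j : ℤ) with hd_def
  let x : ℤ → ℕ → ℂ := fun c n => (n : ℂ) ^ (-(a c))
  let y : ℤ → ℕ → ℝ := fun c n => ‖x c n‖
  have hbox : ∀ i j : ℕ, j < lam i → s (i, j) = a ((j : ℤ) - i) := fun i j h => hdiag (i, j) h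
  -- Every content strictly between `-r` and `lam 0` occurs in the first row or the first column.
  have hge : ∀ c : ℤ, -(r : ℤ) < c → c < lam 0 → 1 ≤ (a c).re := by
    intro c h1 h2
    rcases le_total 0 c with hc | hc
    · have hb : c.toNat < lam 0 := by omega
      have := hW.1 (0, c.toNat) hb
      rw [hbox 0 c.toNat hb] at this
      rwa [show ((c.toNat : ℤ) - ((0 : ℕ) : ℤ)) = c by omega] at this
    · have hb : 0 < lam (-c).toNat := (hlam.2 _).2 (by omega)
      have := hW.1 ((-c).toNat, 0) hb
      rw [hbox (-c).toNat 0 hb] at this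
      rwa [show (((0 : ℕ) : ℤ) - ((-c).toNat : ℤ)) = c by omega] at this
  have hconj_le : ∀ j, SMZ.conjPart r lam j ≤ r := fun j =>
    (Finset.card_filter_le _ _).trans (by simp)
  -- `i - d i + 1` is the content of the bottom box of column `i`.
  have hgt : ∀ i : Fin (lam 0), 1 < (a ((i : ℤ) - d i + 1)).re := by
    intro i
    have hpos : 0 < SMZ.conjPart r lam i := (SMZ.lt_conjPart hlam 0 i).2 i.2
    have hb : (i : ℕ) < lam (SMZ.conjPart r lam i - 1) := (SMZ.lt_conjPart hlam _ i).1 (by omega)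
    have := hre i i.2
    rw [hbox _ _ hb] at this
    rwa [show ((i : ℕ) : ℤ) - ((SMZ.conjPart r lam i - 1 : ℕ) : ℤ) = (i : ℤ) - d i + 1 by
      simp only [hd_def]; omega] at this
  have hsum : ∀ (i j : Fin (lam 0)) (n : ℕ), (n : ℤ) = d i - (i : ℕ) + (j : ℕ) →
      Summable fun f : {f : Fin n → ℕ // StrictMono f ∧ ∀ i, 0 < f i} =>
        ∏ l : Fin n, y ((j : ℕ) - (l : ℕ)) (f.1 l) := by
    intro i j n hn
    have hdr : d i ≤ r := Int.ofNat_le.2 (hconj_le i)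
    refine SMZ.summable_mzv (fun l : Fin n => a (((j : ℕ) : ℤ) - (l : ℕ))) (fun l => ?_) ?_
    · have := l.2
      have := j.2
      exact hge _ (by omega) (by omega)
    · -- The last exponent of the entry `(i, j)` depends on `i` only.
      intro l hl
      rw [show (((j : ℕ) : ℤ) - (l : ℕ)) = (i : ℤ) - d i + 1 by omega]
      exact hgt i
  have hEx : ∀ i j : Fin (lam 0), Filter.Tendsto
      (fun N => SMZ.elemSum x N ((j : ℕ) : ℤ) (d i - (i : ℕ) + (j : ℕ))) Filter.atTop
      (nhds (SMZ.mzvSeqDesc a ((j : ℕ) : ℤ) (d i - (i : ℕ) + (j : ℕ)))) := by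
    intro i j
    rcases lt_or_ge (d i - (i : ℕ) + (j : ℕ)) 0 with h | h
    · simp only [SMZ.mzvSeqDesc, h, if_true, SMZ.elemSum_neg x _ _ _ h]
      exact tendsto_const_nhds
    · obtain ⟨n, hn⟩ := Int.eq_ofNat_of_zero_le h
      have hs' := hsum i j n hn.symm
      rw [hn]
      simp only [SMZ.mzvSeqDesc, SMZ.mzv, not_lt.2 (Int.natCast_nonneg n), if_false]
      refine SMZ.tendsto_elemSum x _ n (Summable.of_norm ?_)
      simpa only [y, norm_prod] using hs'
  have hEy : ∀ i j : Fin (lam 0), ∃ L : ℝ, Filter.Tendsto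
      (fun N => SMZ.elemSum y N ((j : ℕ) : ℤ) (d i - (i : ℕ) + (j : ℕ))) Filter.atTop (nhds L) := by
    intro i j
    rcases lt_or_ge (d i - (i : ℕ) + (j : ℕ)) 0 with h | h
    · simp only [SMZ.elemSum_neg y _ _ _ h]
      exact ⟨0, tendsto_const_nhds⟩
    · obtain ⟨n, hn⟩ := Int.eq_ofNat_of_zero_le h
      rw [hn]
      exact ⟨_, SMZ.tendsto_elemSum y _ n (hsum i j n hn.symm)⟩
  choose L hL using hEy
  have hDy : Filter.Tendsto (fun N => SMZ.elemDet (lam 0) y N d) Filter.atTop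
      (nhds (Matrix.det (Matrix.of L))) :=
    ((continuous_id.matrix_det).tendsto (Matrix.of L)).comp
      (tendsto_pi_nhds.2 fun i => tendsto_pi_nhds.2 fun j => hL i j)
  have hDx : Filter.Tendsto (fun N => SMZ.elemDet (lam 0) x N d) Filter.atTop
      (nhds (Matrix.det (Matrix.of fun i j : Fin (lam 0) =>
        SMZ.mzvSeqDesc a ((j : ℕ) : ℤ) (d i - (i : ℕ) + (j : ℕ))))) :=
    ((continuous_id.matrix_det).tendsto _).comp
      (tendsto_pi_nhds.2 fun i => tendsto_pi_nhds.2 fun j => hEx i j)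
  -- The determinants of the absolute values converge, so they are bounded.
  obtain ⟨C, hC⟩ := hDy.bddAbove_range
  have hsy := SMZ.summable_tabs (y := y) (fun c n => norm_nonneg _) hd
    (fun N => hC (Set.mem_range_self N))
  have hsx : Summable fun m : {m // SMZ.IsTab d m} => SMZ.wt (lam 0) x d m.1 := by
    refine Summable.of_norm ?_
    simpa only [SMZ.wt, y, norm_prod] using hsy
  refine Eq.trans ?_ (tendsto_nhds_unique (SMZ.tendsto_elemDet x hd hsx) hDx)
  unfold SMZ.schurZeta
  simp_rw [SMZ.term_eq_wt hlam s a hdiag]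
  exact Equiv.tsum_eq (Equiv.subtypeEquivRight fun m => SMZ.isSSYT_iff hlam m)
    fun m => SMZ.wt (lam 0) x d m.1
end
end

section
/- For s_1,…,s_n∈ℂ with Re(s_1),…,Re(s_n)>1, the multiple zeta function satisfies ζ(s_1,…,s_n) = det X, where X is the n×n matrix with X_{ij} = ζ⋆(s_j, s_{j−1}, …, s_i) for i ≤ j, X_{ij} = 1 for i = j+1, and X_{ij} = 0 for i > j+1. -/
/-!
The determinant is computed by expanding along the first column. For `a ≤ p < n` let `V(a, p)` be
the sum of `∏ f_i^{-s_i}` over tuples with `f_a ≥ ⋯ ≥ f_p < f_{p+1} < ⋯ < f_{n-1}`, so that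
`V(0, 0) = ζ(s_0, …, s_{n-1})` and `V(a, n-1) = ζ⋆(s_{n-1}, …, s_a)`. Multiplying absolutely
convergent series and comparing `f_p` with `f_{p+1}` gives
`ζ⋆(s_p, …, s_a) · V(p+1, p+1) = V(a, p) + V(a, p+1)` (`SMZ.starSum_mul_vSum`).

On the matrix side, consider the Hessenberg matrix with columns `p, …, n-1`, first row the star
values starting from row index `a`, and further rows those of `X` with indices `p+1, …, n-1`. Its
first column has only the entries `ζ⋆(s_p, …, s_a)` and `1`, and the two minors are the matrices
for `(p+1, p+1)` and `(a, p+1)`. Hence its determinant satisfies the same recurrence as `V(a, p)`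
and equals it (`SMZ.det_hessenberg`); `a = p = 0` is the theorem.

Tuples indexed by a finite set `A ⊆ ℕ` are encoded as functions `ℕ → ℕ` vanishing exactly off `A`,
so that a pair of tuples on disjoint index sets is glued by adding the functions.
-/

open scoped BigOperators

noncomputable section

namespace SMZ

/-! ### Sums over tuples supported on a finite set of indices -/

/-- Tuples of positive integers indexed by `A` satisfying `P`, encoded as functions `ℕ → ℕ`
that vanish exactly off `A`. -/
def tuples (A : Finset ℕ) (P : (ℕ → ℕ) → Prop) : Set (ℕ → ℕ) :=
  {f | (∀ i, 0 < f i ↔ i ∈ A) ∧ P f}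

/-- The monomial `∏_{i ∈ A} f(i)^{-s_i}`. -/
def weight (s : ℕ → ℂ) (A : Finset ℕ) (f : ℕ → ℕ) : ℂ :=
  ∏ i ∈ A, (f i : ℂ) ^ (-(s i))

/-- The zeta-type series of all tuples indexed by `A` satisfying `P`. -/
def zsum (s : ℕ → ℂ) (A : Finset ℕ) (P : (ℕ → ℕ) → Prop) : ℂ :=
  ∑' f : tuples A P, weight s A f

/-- `P f` depends only on the values of `f` on `A`. -/
def DependsOnly (A : Finset ℕ) (P : (ℕ → ℕ) → Prop) : Prop :=
  ∀ f g : ℕ → ℕ, (∀ i ∈ A, f i = g i) → P f → P g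

lemma eq_zero_of_mem_tuples {A : Finset ℕ} {P : (ℕ → ℕ) → Prop} {f : ℕ → ℕ}
    (hf : f ∈ tuples A P) {i : ℕ} (hi : i ∉ A) : f i = 0 := by
  have := (hf.1 i).not.2 hi
  omega

/-- Tuples on `A ∪ B` are pairs of tuples on `A` and on `B`: gluing is addition, and the inverse
is restriction (extended by zero). -/
def glueEquiv (A B : Finset ℕ) (hAB : Disjoint A B) (P Q : (ℕ → ℕ) → Prop)
    (hP : DependsOnly A P) (hQ : DependsOnly B Q) :
    tuples A P × tuples B Q ≃ tuples (A ∪ B) (fun f => P f ∧ Q f) where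
  toFun x := ⟨fun i => x.1.1 i + x.2.1 i, by
    obtain ⟨⟨f, hf⟩, ⟨g, hg⟩⟩ := x
    refine ⟨fun i => ?_, ?_, ?_⟩
    · simp only [Finset.mem_union, ← hf.1 i, ← hg.1 i]
      omega
    · refine hP f _ (fun i hi => ?_) hf.2
      simp [eq_zero_of_mem_tuples hg (Finset.disjoint_left.1 hAB hi)]
    · refine hQ g _ (fun i hi => ?_) hg.2
      simp [eq_zero_of_mem_tuples hf (Finset.disjoint_right.1 hAB hi)]⟩
  invFun h := (⟨fun i => if i ∈ A then h.1 i else 0, by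
      obtain ⟨h, hh⟩ := h
      refine ⟨fun i => ?_, hP h _ (fun i hi => by simp [hi]) hh.2.1⟩
      by_cases hi : i ∈ A
      · simpa [hi] using (hh.1 i).2 (Finset.mem_union_left _ hi)
      · simp [hi]⟩,
    ⟨fun i => if i ∈ B then h.1 i else 0, by
      obtain ⟨h, hh⟩ := h
      refine ⟨fun i => ?_, hQ h _ (fun i hi => by simp [hi]) hh.2.2⟩
      by_cases hi : i ∈ B
      · simpa [hi] using (hh.1 i).2 (Finset.mem_union_right _ hi)
      · simp [hi]⟩)
  left_inv x := by
    obtain ⟨⟨f, hf⟩, ⟨g, hg⟩⟩ := x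
    ext i
    · by_cases hi : i ∈ A
      · simp [hi, eq_zero_of_mem_tuples hg (Finset.disjoint_left.1 hAB hi)]
      · simp [hi, eq_zero_of_mem_tuples hf hi]
    · by_cases hi : i ∈ B
      · simp [hi, eq_zero_of_mem_tuples hf (Finset.disjoint_right.1 hAB hi)]
      · simp [hi, eq_zero_of_mem_tuples hg hi]
  right_inv h := by
    obtain ⟨h, hh⟩ := h
    ext i
    by_cases hA : i ∈ A
    · simp [hA, Finset.disjoint_left.1 hAB hA]
    · by_cases hB : i ∈ B
      · simp [hA, hB]
      · simp [hA, hB, eq_zero_of_mem_tuples hh (i := i) (by simp [hA, hB])]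

lemma weight_glueEquiv (s : ℕ → ℂ) (A B : Finset ℕ) (hAB : Disjoint A B)
    (P Q : (ℕ → ℕ) → Prop) (hP : DependsOnly A P) (hQ : DependsOnly B Q)
    (x : tuples A P × tuples B Q) :
    weight s (A ∪ B) (glueEquiv A B hAB P Q hP hQ x) = weight s A x.1 * weight s B x.2 := by
  obtain ⟨⟨f, hf⟩, ⟨g, hg⟩⟩ := x
  simp only [weight, glueEquiv, Equiv.coe_fn_mk]
  rw [Finset.prod_union hAB]
  congr 1
  · refine Finset.prod_congr rfl fun i hi => ?_
    rw [eq_zero_of_mem_tuples hg (Finset.disjoint_left.1 hAB hi), add_zero]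
  · refine Finset.prod_congr rfl fun i hi => ?_
    rw [eq_zero_of_mem_tuples hf (Finset.disjoint_right.1 hAB hi), zero_add]

/-- Absolute convergence: the unconstrained series is a product of one-variable series
`∑ n^{-s_i}`, each converging absolutely since `Re s_i > 1`. -/
lemma summable_weight_univ (s : ℕ → ℂ) (A : Finset ℕ) (hs : ∀ i ∈ A, 1 < (s i).re) :
    Summable fun f : tuples A (fun _ => True) => ‖weight s A f‖ := by
  induction A using Finset.induction_on with
  | empty =>
    have : Subsingleton (tuples ∅ (fun _ => True)) := ⟨fun f g => by
      ext i
      rw [eq_zero_of_mem_tuples f.2 (by simp), eq_zero_of_mem_tuples g.2 (by simp)]⟩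
    exact Summable.of_finite
  | insert a B ha ih =>
    have h1 : Summable fun f : tuples {a} (fun _ => True) => ‖weight s {a} f‖ := by
      have hz : Summable fun n : ℕ => ‖(n : ℂ) ^ (-(s a))‖ := by
        have := (Complex.summable_one_div_nat_cpow (p := s a)).2 (hs a (by simp))
        simpa [Complex.cpow_neg] using this.norm
      have hinj : Function.Injective fun f : tuples {a} (fun _ => True) => f.1 a := by
        intro f g hfg
        ext i
        by_cases hi : i = a
        · subst hi; exact hfg
        · rw [eq_zero_of_mem_tuples f.2 (by simp [hi]), eq_zero_of_mem_tuples g.2 (by simp [hi])]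
      simpa [weight, Function.comp_def] using hz.comp_injective hinj
    have h2 := h1.mul_norm (ih fun i hi => hs i (by simp [hi]))
    have hd : Disjoint ({a} : Finset ℕ) B := by simpa using ha
    let e := glueEquiv {a} B hd (fun _ => True) (fun _ => True) (fun _ _ _ h => h)
      (fun _ _ _ h => h)
    have h3 : Summable fun f : tuples ({a} ∪ B) (fun _ => True ∧ True) =>
        ‖weight s ({a} ∪ B) f‖ := by
      rw [← e.summable_iff]
      refine h2.congr fun x => ?_
      exact congrArg norm (weight_glueEquiv s {a} B hd _ _ _ _ x).symm
    have hT : (fun _ : ℕ → ℕ => True ∧ True) = fun _ => True := by simp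
    rw [hT, ← Finset.insert_eq] at h3
    exact h3

lemma summable_weight (s : ℕ → ℂ) (A : Finset ℕ) (hs : ∀ i ∈ A, 1 < (s i).re)
    (P : (ℕ → ℕ) → Prop) : Summable fun f : tuples A P => ‖weight s A f‖ := by
  have hsub : tuples A P ⊆ tuples A (fun _ => True) := by
    intro f hf
    exact ⟨hf.1, trivial⟩
  have h := (summable_weight_univ s A hs).comp_injective (Set.inclusion_injective hsub)
  refine h.congr fun f => ?_
  simp only [Function.comp_apply]

lemma zsum_mul (s : ℕ → ℂ) (A B : Finset ℕ) (hAB : Disjoint A B)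
    (hA : ∀ i ∈ A, 1 < (s i).re) (hB : ∀ i ∈ B, 1 < (s i).re)
    (P Q : (ℕ → ℕ) → Prop) (hP : DependsOnly A P) (hQ : DependsOnly B Q) :
    zsum s A P * zsum s B Q = zsum s (A ∪ B) (fun f => P f ∧ Q f) := by
  unfold zsum
  rw [tsum_mul_tsum_of_summable_norm (summable_weight s A hA P) (summable_weight s B hB Q),
    ← (glueEquiv A B hAB P Q hP hQ).tsum_eq]
  exact tsum_congr fun x => (weight_glueEquiv s A B hAB P Q hP hQ x).symm

lemma zsum_split (s : ℕ → ℂ) (A : Finset ℕ) (hA : ∀ i ∈ A, 1 < (s i).re)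
    (P Q T : (ℕ → ℕ) → Prop) (h : ∀ f, T f ↔ P f ∨ Q f) (hd : ∀ f, P f → ¬ Q f) :
    zsum s A T = zsum s A P + zsum s A Q := by
  have hu : tuples A T = tuples A P ∪ tuples A Q := by
    ext f
    simp only [tuples, Set.mem_ofPred_eq, Set.mem_union, h]
    tauto
  unfold zsum
  rw [hu]
  refine Summable.tsum_union_disjoint (f := weight s A) ?_ ?_ ?_
  · exact Set.disjoint_left.2 fun f hf hg => hd f hf.2 hg.2
  · exact (summable_weight s A hA P).of_norm
  · exact (summable_weight s A hA Q).of_norm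

lemma zsum_congr (s : ℕ → ℂ) {A B : Finset ℕ} {P Q : (ℕ → ℕ) → Prop} (hAB : A = B)
    (h : ∀ f, P f ↔ Q f) : zsum s A P = zsum s B Q := by
  obtain rfl : P = Q := funext fun f => propext (h f)
  rw [hAB]

/-! ### The V-shaped sums and their recurrence -/

/-- The star value `ζ⋆(s_p, s_{p-1}, …, s_a)`, as a sum over `f_a ≥ ⋯ ≥ f_p`. -/
def starSum (s : ℕ → ℂ) (a p : ℕ) : ℂ :=
  zsum s (Finset.Ico a (p + 1)) (fun f => AntitoneOn f (Set.Ico a (p + 1)))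

/-- The sum over `f_a ≥ ⋯ ≥ f_p < f_{p+1} < ⋯ < f_{n-1}`. -/
def vSum (s : ℕ → ℂ) (n a p : ℕ) : ℂ :=
  zsum s (Finset.Ico a n)
    (fun f => AntitoneOn f (Set.Ico a (p + 1)) ∧ StrictMonoOn f (Set.Ico p n))

lemma dependsOnly_antitoneOn (a b c d : ℕ) (h : Set.Ico a b ⊆ Set.Ico c d) :
    DependsOnly (Finset.Ico c d) (fun f => AntitoneOn f (Set.Ico a b)) := by
  intro f g hfg hf x hx y hy hxy
  rw [← hfg x (by simpa using h hx), ← hfg y (by simpa using h hy)]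
  exact hf hx hy hxy

lemma dependsOnly_strictMonoOn (a b : ℕ) :
    DependsOnly (Finset.Ico a b) (fun f => StrictMonoOn f (Set.Ico a b)) := by
  intro f g hfg hf x hx y hy hxy
  rw [← hfg x (by simpa using hx), ← hfg y (by simpa using hy)]
  exact hf hx hy hxy

lemma antitoneOn_extend (f : ℕ → ℕ) (a p : ℕ) (hap : a ≤ p) :
    AntitoneOn f (Set.Ico a (p + 1 + 1)) ↔
      AntitoneOn f (Set.Ico a (p + 1)) ∧ f (p + 1) ≤ f p := by
  constructor
  · intro h
    refine ⟨h.mono (Set.Ico_subset_Ico_right (by omega)), h ?_ ?_ (by omega)⟩ <;>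
      simp <;> omega
  · rintro ⟨h, h'⟩ x hx y hy hxy
    simp only [Set.mem_Ico] at hx hy
    rcases Nat.lt_or_ge y (p + 1) with hy' | hy'
    · exact h ⟨hx.1, by omega⟩ ⟨hy.1, hy'⟩ hxy
    · obtain rfl : y = p + 1 := by omega
      rcases Nat.lt_or_ge x (p + 1) with hx' | hx'
      · exact h'.trans (h ⟨hx.1, hx'⟩ ⟨hap, by omega⟩ (by omega))
      · obtain rfl : x = p + 1 := by omega
        exact le_rfl

lemma strictMonoOn_extend (f : ℕ → ℕ) (p n : ℕ) (hp : p + 1 < n) :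
    StrictMonoOn f (Set.Ico p n) ↔
      StrictMonoOn f (Set.Ico (p + 1) n) ∧ f p < f (p + 1) := by
  constructor
  · intro h
    refine ⟨h.mono (Set.Ico_subset_Ico_left (by omega)), h ?_ ?_ (by omega)⟩ <;>
      simp <;> omega
  · rintro ⟨h, h'⟩ x hx y hy hxy
    simp only [Set.mem_Ico] at hx hy
    rcases Nat.lt_or_ge p x with hx' | hx'
    · exact h ⟨hx', hx.2⟩ ⟨by omega, hy.2⟩ hxy
    · obtain rfl : x = p := by omega
      exact h'.trans_le (h.monotoneOn ⟨le_rfl, hp⟩ ⟨by omega, hy.2⟩ (by omega))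

/-- In the product the values `f_p` and `f_{p+1}` are unrelated; the two summands on the right
correspond to `f_p < f_{p+1}` and `f_p ≥ f_{p+1}`. -/
lemma starSum_mul_vSum (s : ℕ → ℂ) (n a p : ℕ) (hs : ∀ i < n, 1 < (s i).re)
    (hap : a ≤ p) (hp : p + 1 < n) :
    starSum s a p * vSum s n (p + 1) (p + 1) = vSum s n a p + vSum s n a (p + 1) := by
  have hA : ∀ i ∈ Finset.Ico a n, 1 < (s i).re := fun i hi => hs i (Finset.mem_Ico.1 hi).2
  have hU : Finset.Ico a (p + 1) ∪ Finset.Ico (p + 1) n = Finset.Ico a n :=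
    Finset.Ico_union_Ico_eq_Ico (by omega) (by omega)
  unfold starSum vSum
  rw [zsum_mul s _ _ (Finset.Ico_disjoint_Ico_consecutive a (p + 1) n)
    (fun i hi => hA i (hU ▸ Finset.mem_union_left _ hi))
    (fun i hi => hA i (hU ▸ Finset.mem_union_right _ hi)) _ _
    (dependsOnly_antitoneOn _ _ _ _ subset_rfl), hU]
  · refine zsum_split s _ hA _ _ _ (fun f => ?_) (fun f hf hg => ?_)
    · have hsing : AntitoneOn f (Set.Ico (p + 1) (p + 1 + 1)) := by
        intro x hx y hy _
        simp only [Set.mem_Ico] at hx hy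
        rw [show x = y by omega]
      rw [antitoneOn_extend f a p hap, strictMonoOn_extend f p n hp]
      have := Nat.lt_or_ge (f p) (f (p + 1))
      tauto
    · have h1 := ((strictMonoOn_extend f p n hp).1 hf.2).2
      have h2 := ((antitoneOn_extend f a p hap).1 hg.1).2
      omega
  · intro f g hfg hf
    exact ⟨dependsOnly_antitoneOn (p + 1) (p + 1 + 1) (p + 1) n
      (Set.Ico_subset_Ico_right (by omega)) f g hfg hf.1,
      dependsOnly_strictMonoOn (p + 1) n f g hfg hf.2⟩

lemma vSum_last (s : ℕ → ℂ) (a p : ℕ) : vSum s (p + 1) a p = starSum s a p := by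
  refine zsum_congr s rfl fun f => ⟨fun h => h.1, fun h => ⟨h, ?_⟩⟩
  intro x hx y hy hxy
  simp only [Set.mem_Ico] at hx hy
  omega

/-! ### The Hessenberg determinant -/

/-- Expansion along the first column of a Hessenberg matrix whose first row carries an
independent row index `a`: both nonzero minors are again of this form. -/
lemma det_hessenberg (S : ℕ → ℕ → ℂ) (R : ℕ → ℕ → ℂ) (n : ℕ)
    (hrec : ∀ a p, a ≤ p → p + 1 < n → S a p * R (p + 1) (p + 1) = R a p + R a (p + 1))
    (hlast : ∀ a p, p + 1 = n → R a p = S a p) (m : ℕ) :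
    ∀ a p, a ≤ p → p + m + 1 = n →
      Matrix.det (Matrix.of fun i j : Fin (m + 1) =>
        if (i : ℕ) = 0 then S a (p + j)
        else if (i : ℕ) ≤ (j : ℕ) then S (p + i) (p + j)
        else if (i : ℕ) = (j : ℕ) + 1 then 1 else 0) = R a p := by
  induction m with
  | zero =>
    intro a p _ hn
    simp [hlast a p (by omega)]
  | succ m ih =>
    intro a p hap hn
    rw [Matrix.det_succ_column_zero, Fin.sum_univ_succ, Fin.sum_univ_succ]
    rw [Finset.sum_eq_zero (fun i _ => by simp)]
    have h0 := ih (p + 1) (p + 1) le_rfl (by omega)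
    have h1 := ih a (p + 1) (by omega) (by omega)
    have e0 : (Matrix.of fun i j : Fin (m + 1 + 1) =>
        if (i : ℕ) = 0 then S a (p + j)
        else if (i : ℕ) ≤ (j : ℕ) then S (p + i) (p + j)
        else if (i : ℕ) = (j : ℕ) + 1 then (1 : ℂ) else 0).submatrix
          (Fin.succAbove 0) Fin.succ = Matrix.of fun i j : Fin (m + 1) =>
        if (i : ℕ) = 0 then S (p + 1) (p + 1 + j)
        else if (i : ℕ) ≤ (j : ℕ) then S (p + 1 + i) (p + 1 + j)
        else if (i : ℕ) = (j : ℕ) + 1 then 1 else 0 := by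
      ext i j
      rcases Fin.eq_zero_or_eq_succ i with rfl | ⟨i, rfl⟩
      · simp [add_comm, add_left_comm]
      · simp [add_comm, add_left_comm]
    have e1 : (Matrix.of fun i j : Fin (m + 1 + 1) =>
        if (i : ℕ) = 0 then S a (p + j)
        else if (i : ℕ) ≤ (j : ℕ) then S (p + i) (p + j)
        else if (i : ℕ) = (j : ℕ) + 1 then (1 : ℂ) else 0).submatrix
          (Fin.succAbove (Fin.succ 0)) Fin.succ = Matrix.of fun i j : Fin (m + 1) =>
        if (i : ℕ) = 0 then S a (p + 1 + j)
        else if (i : ℕ) ≤ (j : ℕ) then S (p + 1 + i) (p + 1 + j)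
        else if (i : ℕ) = (j : ℕ) + 1 then 1 else 0 := by
      ext i j
      rcases Fin.eq_zero_or_eq_succ i with rfl | ⟨i, rfl⟩
      · simp [add_comm, add_left_comm]
      · rw [Matrix.submatrix_apply, Fin.succ_succAbove_succ]
        simp [add_comm, add_left_comm]
    rw [e0, e1, h0, h1]
    have := hrec a p hap (by omega)
    simp only [Matrix.of_apply]
    simp
    linear_combination this

/-! ### Comparison with `mzv` and `mzvStar` -/

lemma mzv_eq_vSum (s : ℕ → ℂ) (n : ℕ) :
    mzv (fun i : Fin n => s i) = vSum s n 0 0 := by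
  let e : {f : Fin n → ℕ // StrictMono f ∧ ∀ i, 0 < f i} ≃
      tuples (Finset.Ico 0 n)
        (fun f => AntitoneOn f (Set.Ico 0 (0 + 1)) ∧ StrictMonoOn f (Set.Ico 0 n)) :=
    { toFun := fun f => ⟨fun i => if h : i < n then f.1 ⟨i, h⟩ else 0, by
        obtain ⟨f, hf, hpos⟩ := f
        refine ⟨fun i => ?_, ?_, ?_⟩
        · by_cases hi : i < n <;> simp [hi, hpos]
        · intro x hx y hy _
          simp only [Set.mem_Ico] at hx hy
          rw [show x = y by omega]
        · intro x hx y hy hxy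
          simp only [Set.mem_Ico] at hx hy
          simpa [hx.2, hy.2] using hf (Fin.mk_lt_mk.2 hxy)⟩
      invFun := fun f => ⟨fun i => f.1 i,
        fun x y hxy => f.2.2.2 (by simp) (by simp) hxy,
        fun i => (f.2.1 i).2 (by simp)⟩
      left_inv := fun f => by ext i; simp
      right_inv := fun f => by
        ext i
        by_cases hi : i < n
        · simp [hi]
        · simp [hi, eq_zero_of_mem_tuples f.2 (i := i) (by simpa using hi)] }
  unfold mzv vSum zsum
  rw [← e.tsum_eq]
  refine tsum_congr fun f => ?_
  simp only [weight, ← Finset.range_eq_Ico, Finset.prod_range]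
  refine Finset.prod_congr rfl fun i _ => ?_
  simp [e]

/-- The index change `k ↦ p - k` turns weakly increasing tuples into weakly decreasing ones. -/
lemma mzvStar_eq_starSum (s : ℕ → ℂ) (a p : ℕ) (hap : a ≤ p) :
    mzvStar (fun k : Fin (p - a + 1) => s (p - (k : ℕ))) = starSum s a p := by
  let e : {f : Fin (p - a + 1) → ℕ // Monotone f ∧ ∀ i, 0 < f i} ≃
      tuples (Finset.Ico a (p + 1)) (fun f => AntitoneOn f (Set.Ico a (p + 1))) :=
    { toFun := fun f => ⟨fun i => if h : a ≤ i ∧ i < p + 1 then f.1 ⟨p - i, by omega⟩ else 0, by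
        obtain ⟨f, hf, hpos⟩ := f
        refine ⟨fun i => ?_, ?_⟩
        · by_cases hi : a ≤ i ∧ i < p + 1
          · simp only [hi, and_self, dite_true, hpos, Finset.mem_Ico]
          · simp only [hi, dite_false, Finset.mem_Ico, lt_irrefl]
        · intro x hx y hy hxy
          simp only [Set.mem_Ico] at hx hy
          simp only [hx, hy, and_self, dite_true]
          exact hf (Fin.mk_le_mk.2 (by omega))⟩
      invFun := fun f => ⟨fun k => f.1 (p - k),
        fun x y hxy => f.2.2 (by simp; omega) (by simp; omega)
          (by have : (x : ℕ) ≤ y := hxy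
              omega),
        fun k => (f.2.1 _).2 (by simp; omega)⟩
      left_inv := fun f => by
        ext k
        have hk : a ≤ p - (k : ℕ) ∧ p - (k : ℕ) < p + 1 := by omega
        simp only [hk, and_self, dite_true]
        exact congrArg f.1 (Fin.ext (by simp only; omega))
      right_inv := fun f => by
        ext i
        by_cases hi : a ≤ i ∧ i < p + 1
        · simp only [hi, and_self, dite_true]
          exact congrArg f.1 (by omega)
        · simp only [hi, dite_false]
          exact (eq_zero_of_mem_tuples f.2 (by simpa using hi)).symm }
  unfold mzvStar starSum zsum
  rw [← e.symm.tsum_eq]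
  refine tsum_congr fun f => ?_
  simp only [weight]
  refine Finset.prod_bij (fun k _ => p - (k : ℕ)) ?_ ?_ ?_ ?_
  · intro k _
    simp only [Finset.mem_Ico]
    omega
  · intro k _ l _ h
    ext
    omega
  · intro i hi
    simp only [Finset.mem_Ico] at hi
    exact ⟨⟨p - i, by omega⟩, Finset.mem_univ _, by simp only; omega⟩
  · intro k _
    rfl

end SMZ

/-- The multiple zeta function as a determinant of multiple zeta-star values. -/
theorem mzv_eq_det_mzvStar
    (n : ℕ) (s : ℕ → ℂ) (hs : ∀ i < n, 1 < (s i).re) :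
    SMZ.mzv (fun i : Fin n => s i) =
      Matrix.det (Matrix.of fun i j : Fin n =>
        if (i : ℕ) ≤ (j : ℕ) then
          SMZ.mzvStar (fun k : Fin ((j : ℕ) - (i : ℕ) + 1) => s ((j : ℕ) - (k : ℕ)))
        else if (i : ℕ) = (j : ℕ) + 1 then 1 else 0) := by
  rw [SMZ.mzv_eq_vSum]
  cases n with
  | zero =>
    -- Both sides equal `1`: the only tuple is the empty one.
    rw [← SMZ.mzv_eq_vSum]
    simp [SMZ.mzv, Subsingleton.strictMono]
  | succ m =>
    rw [← SMZ.det_hessenberg (SMZ.starSum s) (SMZ.vSum s (m + 1)) (m + 1)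
      (fun a p hap hp => SMZ.starSum_mul_vSum s (m + 1) a p hs hap hp)
      (fun a p hp => by rw [← hp, SMZ.vSum_last]) m 0 0 le_rfl (by omega)]
    congr 1
    ext i j
    simp only [Matrix.of_apply, zero_add]
    by_cases hij : (i : ℕ) ≤ (j : ℕ)
    · rw [if_pos hij, if_pos hij, SMZ.mzvStar_eq_starSum s i j hij]
      by_cases hi : (i : ℕ) = 0
      · simp [hi]
      · simp [hi]
    · have hi : (i : ℕ) ≠ 0 := by omega
      simp [hi, hij]
end
end

section
/- For s_1,…,s_n∈ℂ with Re(s_1),…,Re(s_n)>1, the multiple zeta-star function satisfies ζ⋆(s_1,…,s_n) = det X, where X is the n×n matrix with X_{ij} = ζ(s_j, s_{j−1}, …, s_i) for i ≤ j, X_{ij} = 1 for i = j+1, and X_{ij} = 0 for i > j+1. -/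
/-!
Write `F f = ∏ a, (f a) ^ (-s a)` for `f : Fin n → ℕ`; since every exponent has real part `> 1`,
`F` is absolutely summable over all of `Fin n → ℕ` (`summable_monomial`). The product
`ζ⋆(s_0, …, s_{i-1}) · ζ(s_{n-1}, …, s_i)` is the sum of `F` over the set `hookSet n i` of positive
`f` that weakly increase on the indices `< i` and strictly decrease on the indices `≥ i`
(`hookSum_eq_mul`). Comparing `f (i-1)` with `f i` splits `hookSet n i` into two sets,
`peakSet n i ∪ peakSet n (i+1)`, so for `n ≥ 1` the alternating sum over `i` telescopes:
`∑_{i ≤ n} (-1)^i ζ⋆(s_0, …, s_{i-1}) ζ(s_{n-1}, …, s_i) = 0` (`alternating_hookSum`).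

These relations, for all sizes up to `n`, say that adding to row `0` of the matrix the multiples
`(-1)^i ζ⋆(s_0, …, s_{i-1})` of the rows `i ≥ 1` turns it into
`(0, …, 0, (-1)^(n-1) ζ⋆(s_0, …, s_{n-1}))`. Expanding the determinant along this row leaves a
unitriangular minor (`det_hessenberg`).
-/

open scoped BigOperators

noncomputable section

namespace SMZ

/-- The monomial `∏ a, (f a) ^ (-s a)`, regarded as a function on all of `Fin n → ℕ`. -/
def monomial (n : ℕ) (s : ℕ → ℂ) (f : Fin n → ℕ) : ℂ := ∏ a, (f a : ℂ) ^ (-(s a))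

/-- Positive `f : Fin n → ℕ` that weakly increase on the indices `< i` and strictly decrease on the
indices `≥ i`, with no condition relating the two blocks. -/
def hookSet (n i : ℕ) : Set (Fin n → ℕ) :=
  {f | (∀ a b : Fin n, a ≤ b → (b : ℕ) < i → f a ≤ f b) ∧
    (∀ a b : Fin n, i ≤ (a : ℕ) → a < b → f b < f a) ∧ ∀ a, 0 < f a}

/-- Positive `f : Fin n → ℕ` that weakly increase up to the index `k - 1` and strictly decrease
from that index on; empty unless `1 ≤ k ≤ n`. -/
def peakSet (n k : ℕ) : Set (Fin n → ℕ) :=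
  {f | 1 ≤ k ∧ k ≤ n ∧ (∀ a b : Fin n, a ≤ b → (b : ℕ) < k → f a ≤ f b) ∧
    (∀ a b : Fin n, k ≤ (a : ℕ) + 1 → a < b → f b < f a) ∧ ∀ a, 0 < f a}

/-- The sum of the monomial over `hookSet n i`. -/
def hookSum (n i : ℕ) (s : ℕ → ℂ) : ℂ := ∑' f, (hookSet n i).indicator (monomial n s) f

/-- The sum of the monomial over `peakSet n k`. -/
def peakSum (n k : ℕ) (s : ℕ → ℂ) : ℂ := ∑' f, (peakSet n k).indicator (monomial n s) f

lemma summable_prod_pi_s4 (n : ℕ) (u : Fin n → ℕ → ℂ) (hu : ∀ a, Summable fun k => ‖u a k‖) :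
    Summable fun f : Fin n → ℕ => ‖∏ a, u a (f a)‖ := by
  induction n with
  | zero => exact Summable.of_finite
  | succ n ih =>
    have h := (hu 0).mul_of_nonneg (ih (fun a => u a.succ) fun a => hu _)
      (fun _ => norm_nonneg _) (fun _ => norm_nonneg _)
    rw [← (Fin.consEquiv fun _ : Fin (n + 1) => ℕ).summable_iff]
    refine h.congr fun p => ?_
    simp [Fin.prod_univ_succ, Fin.consEquiv]

lemma summable_monomial (n : ℕ) (s : ℕ → ℂ) (hs : ∀ i < n, 1 < (s i).re) :
    Summable fun f => ‖monomial n s f‖ := by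
  refine summable_prod_pi_s4 n (fun a k => (k : ℂ) ^ (-(s a))) fun a => ?_
  have h := (Complex.summable_one_div_nat_cpow (p := s a)).2 (hs a a.2)
  refine h.norm.congr fun k => ?_
  rw [Complex.cpow_neg, one_div]

lemma hookSet_eq_union (n i : ℕ) (hn : 0 < n) (hi : i ≤ n) :
    hookSet n i = peakSet n i ∪ peakSet n (i + 1) := by
  ext f
  simp only [hookSet, peakSet, Set.mem_union, Set.mem_ofPred_eq]
  constructor
  · rintro ⟨h1, h2, h3⟩
    rcases Nat.eq_zero_or_pos i with rfl | hi0
    · refine Or.inr ⟨le_rfl, hn, fun a b hab hb => ?_, fun a b _ hab => h2 a b (by omega) hab, h3⟩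
      have : a = b := by
        apply Fin.ext
        have := Fin.le_def.1 hab
        omega
      rw [this]
    rcases hi.eq_or_lt with rfl | hin
    · refine Or.inl ⟨hi0, le_rfl, h1, fun a b ha hab => ?_, h3⟩
      have := Fin.lt_def.1 hab
      omega
    rcases le_or_gt (f ⟨i - 1, by omega⟩) (f ⟨i, hin⟩) with hc | hc
    · refine Or.inr ⟨by omega, by omega, fun a b hab hb => ?_,
        fun a b ha hab => h2 a b (by omega) hab, h3⟩
      rcases (Nat.lt_succ_iff.1 hb).eq_or_lt with hb' | hb'
      · rcases hab.eq_or_lt with rfl | hlt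
        · rfl
        · have hbb : b = ⟨i, hin⟩ := Fin.ext hb'
          have := Fin.lt_def.1 hlt
          rw [hbb]
          exact (h1 a ⟨i - 1, by omega⟩ (Fin.le_def.2 (by simp; omega)) (by simp; omega)).trans hc
      · exact h1 a b hab hb'
    · refine Or.inl ⟨hi0, hi, h1, fun a b ha hab => ?_, h3⟩
      have hab' := Fin.lt_def.1 hab
      rcases Nat.lt_or_ge (a : ℕ) i with ha' | ha'
      · have haa : a = ⟨i - 1, by omega⟩ := Fin.ext (by simp; omega)
        rw [haa]
        refine lt_of_le_of_lt ?_ hc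
        rcases Nat.lt_or_ge i b with hb' | hb'
        · exact (h2 ⟨i, hin⟩ b le_rfl (Fin.lt_def.2 hb')).le
        · have : b = ⟨i, hin⟩ := Fin.ext (by simp; omega)
          rw [this]
      · exact h2 a b ha' hab
  · rintro (⟨_, _, h1, h2, h3⟩ | ⟨_, _, h1, h2, h3⟩)
    · exact ⟨h1, fun a b ha hab => h2 a b (by omega) hab, h3⟩
    · exact ⟨fun a b hab hb => h1 a b hab (by omega), fun a b ha hab => h2 a b (by omega) hab, h3⟩

lemma disjoint_peakSet (n i : ℕ) : Disjoint (peakSet n i) (peakSet n (i + 1)) := by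
  rw [Set.disjoint_left]
  rintro f ⟨h0, _, _, h2, _⟩ ⟨_, h0', h1, _, _⟩
  have hlt : (⟨i - 1, by omega⟩ : Fin n) < ⟨i, by omega⟩ := Fin.lt_def.2 (by simp; omega)
  have ha := h2 ⟨i - 1, by omega⟩ ⟨i, by omega⟩ (by simp; omega) hlt
  have hb := h1 ⟨i - 1, by omega⟩ ⟨i, by omega⟩ hlt.le (by simp)
  omega

lemma hookSum_eq_add (n i : ℕ) (s : ℕ → ℂ) (hs : ∀ i < n, 1 < (s i).re) (hn : 0 < n)
    (hi : i ≤ n) : hookSum n i s = peakSum n i s + peakSum n (i + 1) s := by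
  have hF := (summable_monomial n s hs).of_norm
  unfold hookSum peakSum
  rw [← (hF.indicator _).tsum_add (hF.indicator _), hookSet_eq_union n i hn hi,
    Set.indicator_union_of_disjoint (disjoint_peakSet n i)]

lemma alternating_hookSum (n : ℕ) (s : ℕ → ℂ) (hs : ∀ i < n, 1 < (s i).re) (hn : 0 < n) :
    ∑ i ∈ Finset.range (n + 1), (-1 : ℂ) ^ i * hookSum n i s = 0 := by
  have key : ∀ m ≤ n + 1, ∑ i ∈ Finset.range m, (-1 : ℂ) ^ i * hookSum n i s =
      peakSum n 0 s - (-1) ^ m * peakSum n m s := by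
    intro m
    induction m with
    | zero => simp
    | succ m ih =>
      intro hm
      rw [Finset.sum_range_succ, ih (by omega), hookSum_eq_add n m s hs hn (by omega)]
      ring
  rw [key _ le_rfl]
  have h0 : peakSet n 0 = ∅ := by ext f; simp [peakSet]
  have h1 : peakSet n (n + 1) = ∅ := by ext f; simp [peakSet]
  simp [peakSum, h0, h1]

/-- Concatenation of `f` with the reversal of `g`: a strictly increasing `g`, as in `mzv`, becomes
the strictly decreasing block of a member of `hookSet`. -/
def appendRev (i m : ℕ) : (Fin i → ℕ) × (Fin m → ℕ) ≃ (Fin (i + m) → ℕ) :=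
  ((Equiv.refl _).prodCongr (Equiv.arrowCongr Fin.revPerm (Equiv.refl ℕ))).trans
    (Fin.appendEquiv i m)

lemma appendRev_castAdd (i m : ℕ) (p : (Fin i → ℕ) × (Fin m → ℕ)) (a : Fin i) :
    appendRev i m p (Fin.castAdd m a) = p.1 a := by
  simp [appendRev, Fin.appendEquiv]

lemma appendRev_natAdd (i m : ℕ) (p : (Fin i → ℕ) × (Fin m → ℕ)) (a : Fin m) :
    appendRev i m p (Fin.natAdd i a) = p.2 a.rev := by
  simp [appendRev, Fin.appendEquiv]

lemma appendRev_mem_hookSet (i m : ℕ) (p : (Fin i → ℕ) × (Fin m → ℕ)) :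
    appendRev i m p ∈ hookSet (i + m) i ↔
      (Monotone p.1 ∧ ∀ a, 0 < p.1 a) ∧ (StrictMono p.2 ∧ ∀ a, 0 < p.2 a) := by
  simp only [hookSet, Set.mem_ofPred_eq, Fin.forall_fin_add, appendRev_castAdd, appendRev_natAdd]
  constructor
  · rintro ⟨⟨h1, _⟩, ⟨_, h2⟩, h3, h4⟩
    refine ⟨⟨fun a b hab => (h1 a).1 b ?_ ?_, h3⟩, fun a b hab => ?_, fun a => ?_⟩
    · exact Fin.le_def.2 (Fin.le_def.1 hab)
    · simp
    · have := (h2 b.rev).2 a.rev (by simp) (by simpa using hab)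
      simpa using this
    · simpa using h4 a.rev
  · rintro ⟨⟨h1, h3⟩, h2, h4⟩
    refine ⟨⟨fun a => ⟨fun b hab _ => h1 ?_, fun b _ hb => ?_⟩,
      fun a => ⟨fun b hab hb => ?_, fun b _ hb => ?_⟩⟩, ⟨fun a => ⟨fun b ha => ?_, fun b ha => ?_⟩,
      fun a => ⟨fun b _ hab => ?_, fun b _ hab => h2 ?_⟩⟩, h3, fun a => h4 _⟩
    · exact Fin.le_def.2 (Fin.le_def.1 hab)
    · simp at hb
    · simp only [Fin.le_def, Fin.val_natAdd, Fin.val_castAdd] at hab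
      omega
    · simp at hb
    · simp only [Fin.val_castAdd] at ha
      omega
    · simp only [Fin.val_castAdd] at ha
      omega
    · simp only [Fin.lt_def, Fin.val_natAdd, Fin.val_castAdd] at hab
      omega
    · simpa using hab

lemma monomial_appendRev (i m : ℕ) (s : ℕ → ℂ) (p : (Fin i → ℕ) × (Fin m → ℕ)) :
    monomial (i + m) s (appendRev i m p) =
      monomial i s p.1 * monomial m (fun k => s (i + (m - 1 - k))) p.2 := by
  unfold monomial
  rw [Fin.prod_univ_add]
  simp only [appendRev_castAdd, appendRev_natAdd, Fin.val_castAdd, Fin.val_natAdd]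
  congr 1
  rw [← Equiv.prod_comp Fin.revPerm]
  refine Finset.prod_congr rfl fun a _ => ?_
  simp only [Fin.revPerm_apply, Fin.rev_rev, Fin.val_rev]
  congr 4
  omega

lemma hookSum_eq_mul (i m : ℕ) (s : ℕ → ℂ) (hs : ∀ a < i + m, 1 < (s a).re) :
    hookSum (i + m) i s =
      mzvStar (fun a : Fin i => s a) * mzv (fun k : Fin m => s (i + (m - 1 - k))) := by
  have hstar : mzvStar (fun a : Fin i => s a) =
      ∑' f, {f : Fin i → ℕ | Monotone f ∧ ∀ a, 0 < f a}.indicator (monomial i s) f :=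
    tsum_subtype {f : Fin i → ℕ | Monotone f ∧ ∀ a, 0 < f a} (monomial i s)
  have hmzv : mzv (fun k : Fin m => s (i + (m - 1 - k))) =
      ∑' f, {f : Fin m → ℕ | StrictMono f ∧ ∀ a, 0 < f a}.indicator
        (monomial m fun k => s (i + (m - 1 - k))) f :=
    tsum_subtype {f : Fin m → ℕ | StrictMono f ∧ ∀ a, 0 < f a}
      (monomial m fun k => s (i + (m - 1 - k)))
  have hs1 := summable_monomial i s fun a ha => hs a (by omega)
  have hs2 := summable_monomial m (fun k => s (i + (m - 1 - k))) fun a ha => hs _ (by omega)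
  rw [hstar, hmzv, tsum_mul_tsum_of_summable_norm]
  · unfold hookSum
    rw [← (appendRev i m).tsum_eq]
    refine tsum_congr fun p => ?_
    classical
    simp only [Set.indicator_apply, appendRev_mem_hookSet, monomial_appendRev, Set.mem_ofPred_eq]
    split_ifs <;> simp_all
  · simpa only [norm_indicator_eq_indicator_norm] using
      hs1.indicator {f : Fin i → ℕ | Monotone f ∧ ∀ a, 0 < f a}
  · simpa only [norm_indicator_eq_indicator_norm] using
      hs2.indicator {f : Fin m → ℕ | StrictMono f ∧ ∀ a, 0 < f a}

lemma mzvStar_empty (s : Fin 0 → ℂ) : mzvStar s = 1 := by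
  have : Unique {f : Fin 0 → ℕ // Monotone f ∧ ∀ i, 0 < f i} :=
    { default := ⟨Fin.elim0, fun a => a.elim0, fun a => a.elim0⟩
      uniq := fun f => Subtype.ext (Subsingleton.elim _ _) }
  simp [mzvStar, tsum_fintype]

lemma mzv_empty (s : Fin 0 → ℂ) : mzv s = 1 := by
  have : Unique {f : Fin 0 → ℕ // StrictMono f ∧ ∀ i, 0 < f i} :=
    { default := ⟨Fin.elim0, fun a => a.elim0, fun a => a.elim0⟩
      uniq := fun f => Subtype.ext (Subsingleton.elim _ _) }
  simp [mzv, tsum_fintype]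

/-- A Hessenberg matrix with unit subdiagonal whose entries satisfy the alternating relations
`∑_{i ≤ j+1} (-1)^i h_i x_{ij} = 0` (where `h_0 = x_{j+1,j} = 1`) has determinant `h_n`: the relations
clear row `0` except for its last entry. -/
lemma det_hessenberg_s4 (n : ℕ) (h : ℕ → ℂ) (x : ℕ → ℕ → ℂ) (h0 : h 0 = 1)
    (hrel : ∀ j < n, ∑ i ∈ Finset.range (j + 1), (-1) ^ i * h i * x i j = (-1) ^ j * h (j + 1))
    (hsub : ∀ j, x (j + 1) j = 1) (hzero : ∀ i j, j + 1 < i → x i j = 0) :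
    Matrix.det (Matrix.of fun i j : Fin n => x i j) = h n := by
  cases n with
  | zero => simp [h0]
  | succ n =>
    set A : Matrix (Fin (n + 1)) (Fin (n + 1)) ℂ := Matrix.of fun i j => x i j with hA
    have hrow : (∑ k : Fin (n + 1), ((-1 : ℂ) ^ (k : ℕ) * h k) • A k) =
        Pi.single (Fin.last n) ((-1) ^ n * h (n + 1)) := by
      ext j
      have e : (∑ k : Fin (n + 1), ((-1 : ℂ) ^ (k : ℕ) * h k) • A k) j =
          ∑ i ∈ Finset.range (n + 1), (-1) ^ i * h i * x i j := by
        rw [Finset.sum_range, Finset.sum_apply]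
        rfl
      rw [e]
      rcases (Fin.le_last j).eq_or_lt with rfl | hj
      · simpa using hrel n (by omega)
      · rw [Pi.single_eq_of_ne hj.ne]
        have hj' : (j : ℕ) < n := by simpa [Fin.lt_def] using hj
        rw [← Finset.sum_subset (s₁ := Finset.range (j + 2))]
        · rw [Finset.sum_range_succ, hrel j (by omega), hsub]
          ring
        · intro i hi
          simp only [Finset.mem_range] at hi ⊢
          omega
        · intro i _ hi
          rw [hzero i j (by simp at hi; omega), mul_zero]
    have hdet := Matrix.det_updateRow_sum A 0 fun k => (-1 : ℂ) ^ (k : ℕ) * h k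
    rw [hrow] at hdet
    simp only [Fin.val_zero, pow_zero, h0, mul_one, one_smul] at hdet
    rw [← hdet, Matrix.det_succ_row_zero, Finset.sum_eq_single (Fin.last n)]
    · have hminor : ((A.updateRow 0 (Pi.single (Fin.last n) ((-1) ^ n * h (n + 1)))).submatrix
          Fin.succ (Fin.last n).succAbove).det = 1 := by
        rw [Matrix.det_of_isUpperTriangular]
        · refine Finset.prod_eq_one fun i _ => ?_
          simp [Matrix.updateRow_ne, Fin.succ_ne_zero, hA, hsub]
        · intro i j hij
          have hij' : (j : ℕ) < i := hij
          simp only [Matrix.submatrix_apply, Fin.succAbove_last]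
          rw [Matrix.updateRow_ne (Fin.succ_ne_zero i)]
          exact hzero _ _ (by simpa using hij')
      rw [hminor, Matrix.updateRow_self, Pi.single_eq_same, Fin.val_last, mul_one, ← mul_assoc,
        ← mul_pow]
      simp
    · intro j _ hj
      rw [Matrix.updateRow_self, Pi.single_eq_of_ne hj]
      simp
    · simp

end SMZ

/-- The multiple zeta-star function as a determinant of multiple zeta values. -/
theorem mzvStar_eq_det_mzv
    (n : ℕ) (s : ℕ → ℂ) (hs : ∀ i < n, 1 < (s i).re) :
    SMZ.mzvStar (fun i : Fin n => s i) =
      Matrix.det (Matrix.of fun i j : Fin n =>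
        if (i : ℕ) ≤ (j : ℕ) then
          SMZ.mzv (fun k : Fin ((j : ℕ) - (i : ℕ) + 1) => s ((j : ℕ) - (k : ℕ)))
        else if (i : ℕ) = (j : ℕ) + 1 then 1 else 0) := by
  refine (SMZ.det_hessenberg_s4 n (fun i => SMZ.mzvStar fun a : Fin i => s a)
    (fun i j => if i ≤ j then SMZ.mzv (fun k : Fin (j - i + 1) => s (j - k))
      else if i = j + 1 then 1 else 0) (SMZ.mzvStar_empty _) ?_ ?_ ?_).symm
  · intro j hj
    have halt := SMZ.alternating_hookSum (j + 1) s (fun i hi => hs i (by omega)) (by omega)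
    rw [Finset.sum_range_succ] at halt
    have hlast := SMZ.hookSum_eq_mul (j + 1) 0 s fun a ha => hs a (by omega)
    rw [SMZ.mzv_empty, mul_one, add_zero] at hlast
    have hterm : ∀ i ∈ Finset.range (j + 1), (-1 : ℂ) ^ i * SMZ.hookSum (j + 1) i s =
        (-1) ^ i * SMZ.mzvStar (fun a : Fin i => s a) *
          (if i ≤ j then SMZ.mzv (fun k : Fin (j - i + 1) => s (j - k))
            else if i = j + 1 then 1 else 0) := by
      intro i hi
      obtain ⟨m, rfl⟩ := Nat.exists_eq_add_of_le (Nat.lt_succ_iff.1 (Finset.mem_range.1 hi))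
      have hm := SMZ.hookSum_eq_mul i (m + 1) s fun a ha => hs a (by omega)
      rw [← add_assoc] at hm
      rw [hm, if_pos (by omega), mul_assoc, Nat.add_sub_cancel_left]
      congr 4
      funext k
      congr 1
      omega
    rw [Finset.sum_congr rfl hterm, hlast] at halt
    linear_combination halt
  · intro j
    simp
  · intro i j hij
    rw [if_neg (by omega), if_neg (by omega)]
end
end
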